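/- arXiv:1601.06318 — 11 statements merged into one kernel-verified Lean document; each statement's English description precedes it below -/
import Mathlib

section
/- For every positive integer N and all indices 1 ≤ i ≤ k ≤ n+1, the entries of the N-th powers of the matrices A and B satisfy (A^N)_{i,k} = N^{k−i} · A_{i,k} and (B^N)_{i,k} = N^{k−i} · B_{i,k}. -/
lemma binom_inv {R : Type*} [CommRing R] {n : ℕ} (hunit : IsUnit ((Nat.factorial n : ℕ) : R))
    {d m : ℕ} (hd : d ≤ n) (hm : m ≤ d) :
    Ring.inverse ((Nat.factorial m : ℕ) : R) * Ring.inverse ((Nat.factorial (d - m) : ℕ) : R)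
      = (d.choose m : R) * Ring.inverse ((Nat.factorial d : ℕ) : R) := by
  have U : ∀ e ≤ n, IsUnit ((Nat.factorial e : ℕ) : R) := fun e he =>
    isUnit_of_dvd_unit (Nat.cast_dvd_cast (Nat.factorial_dvd_factorial he)) hunit
  have h1 := Ring.mul_inverse_cancel _ (U m (by omega))
  have h2 := Ring.mul_inverse_cancel _ (U (d - m) (by omega))
  have h3 := Ring.mul_inverse_cancel _ (U d hd)
  have h4 : (d.choose m : R) * (Nat.factorial m : R) * (Nat.factorial (d - m) : R)
      = (Nat.factorial d : R) := by
    exact_mod_cast congrArg (Nat.cast (R := R)) (Nat.choose_mul_factorial_mul_factorial hm)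
  generalize Ring.inverse ((Nat.factorial m : ℕ) : R) = x at *
  generalize Ring.inverse ((Nat.factorial (d - m) : ℕ) : R) = y at *
  generalize Ring.inverse ((Nat.factorial d : ℕ) : R) = z at *
  rw [← h4] at h3
  generalize (Nat.factorial m : R) = a at *
  generalize (Nat.factorial (d - m) : R) = b at *
  generalize (d.choose m : R) = c at *
  calc x * y = x * y * (c * a * b * z) := by rw [h3, mul_one]
    _ = (a * x) * (b * y) * (c * z) := by ring
    _ = c * z := by rw [h1, h2]; ring

lemma sum_inv {R : Type*} [CommRing R] {n : ℕ} (hunit : IsUnit ((Nat.factorial n : ℕ) : R))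
    (x : R) {d : ℕ} (hd : d ≤ n) :
    ∑ m ∈ Finset.range (d + 1), x ^ m * Ring.inverse ((Nat.factorial m : ℕ) : R) *
      Ring.inverse ((Nat.factorial (d - m) : ℕ) : R)
      = (x + 1) ^ d * Ring.inverse ((Nat.factorial d : ℕ) : R) := by
  rw [add_pow, Finset.sum_mul]
  refine Finset.sum_congr rfl fun m hm => ?_
  rw [mul_assoc, binom_inv hunit hd (by simpa [Nat.lt_succ_iff] using hm)]
  simp [mul_assoc]

lemma A_step {n : ℕ} {R : Type*} [CommRing R] (hunit : IsUnit ((Nat.factorial n : ℕ) : R))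
    (a : ℕ → ℕ → R)
    (ha : ∀ i j : ℕ, a i j =
      if i = j then 1 else if 0 < i ∧ i ≤ j ∧ j < n then
        Ring.inverse ((Nat.factorial (j - i) : ℕ) : R) else 0)
    (x : R) {i k : ℕ} (hi : i < n + 1) (hk : k < n + 1) :
    ∑ j ∈ Finset.range (n + 1), x ^ (j - i) * a i j * a j k = (x + 1) ^ (k - i) * a i k := by
  have hz : ∀ p q, q < p → a p q = 0 := fun p q h => by
    rw [ha, if_neg (by omega), if_neg (by omega)]
  have hd : ∀ p, a p p = 1 := fun p => by rw [ha, if_pos rfl]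
  by_cases h : 0 < i ∧ i ≤ k ∧ k < n
  · have hin : ∀ p q, 0 < p → p ≤ q → q < n →
        a p q = Ring.inverse ((Nat.factorial (q - p) : ℕ) : R) := by
      intro p q h1 h2 h3
      rw [ha]
      split_ifs with h4
      · subst h4; simp
      · rfl
      · omega
    obtain ⟨h0, hik, hkn⟩ := h
    rw [hin i k h0 hik hkn, ← sum_inv hunit x (by omega : k - i ≤ n)]
    have hsub : Finset.Ico i (k + 1) ⊆ Finset.range (n + 1) := by
      intro j; simp only [Finset.mem_Ico, Finset.mem_range]; omega
    rw [← Finset.sum_subset hsub, Finset.sum_Ico_eq_sum_range, show k + 1 - i = k - i + 1 by omega]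
    · refine Finset.sum_congr rfl fun m hm => ?_
      rw [Finset.mem_range] at hm
      rw [hin i (i + m) h0 (by omega) (by omega), hin (i + m) k (by omega) (by omega) hkn,
        show i + m - i = m by omega, show k - (i + m) = k - i - m by omega]
    · intro j _ hj
      rw [Finset.mem_Ico] at hj
      rcases lt_or_ge j i with h | h
      · rw [hz i j h]; ring
      · rw [hz j k (by omega)]; ring
  · have hnz : ∀ p q, p ≠ q → (¬ (0 < p ∧ p ≤ q ∧ q < n)) → a p q = 0 := fun p q h h' => by
      rw [ha, if_neg h, if_neg h']
    rw [Finset.sum_eq_single i]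
    · rw [hd]
      by_cases hik : i = k
      · subst hik; simp
      · rw [hnz i k hik h]; simp
    · intro j hj hji
      rw [Finset.mem_range] at hj
      by_cases h1 : 0 < i ∧ i ≤ j ∧ j < n
      · rw [hnz j k (by omega) (by omega)]; ring
      · rw [hnz i j (by omega) h1]; ring
    · intro h; simp at h; omega

theorem stmt_0 {n : ℕ} (hn : 3 ≤ n) {R : Type*} [CommRing R]
    (hunit : IsUnit ((Nat.factorial n : ℕ) : R))
    (A B : Matrix (Fin (n + 1)) (Fin (n + 1)) R)
    (hA : ∀ i j : Fin (n + 1), A i j =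
      if (i : ℕ) = (j : ℕ) then 1
      else if 0 < (i : ℕ) ∧ (i : ℕ) ≤ (j : ℕ) ∧ (j : ℕ) < n then
        Ring.inverse ((Nat.factorial ((j : ℕ) - (i : ℕ)) : ℕ) : R)
      else 0)
    (hB : B = 1 + Matrix.single (⟨0, by omega⟩ : Fin (n + 1)) ⟨1, by omega⟩ 1
            + Matrix.single (⟨n - 1, by omega⟩ : Fin (n + 1)) ⟨n, by omega⟩ 1)
    (N : ℕ) (hN : 0 < N) :
    (∀ i k : Fin (n + 1), (i : ℕ) ≤ (k : ℕ) →
      (A ^ N) i k = (N : R) ^ ((k : ℕ) - (i : ℕ)) * A i k) ∧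
    (∀ i k : Fin (n + 1), (i : ℕ) ≤ (k : ℕ) →
      (B ^ N) i k = (N : R) ^ ((k : ℕ) - (i : ℕ)) * B i k) := by
  constructor
  · clear hB hN
    have key : ∀ i k : Fin (n + 1), (A ^ N) i k = (N : R) ^ ((k : ℕ) - (i : ℕ)) * A i k := by
      induction N with
      | zero =>
        intro i k
        rw [pow_zero, Matrix.one_apply, hA]
        by_cases h : i = k
        · subst h; simp
        · have h' : (i : ℕ) ≠ k := fun e => h (Fin.ext e)
          rw [if_neg h, if_neg h']
          split_ifs with h2
          · rw [Nat.cast_zero, zero_pow (by omega), zero_mul]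
          · simp
      | succ N ih =>
        intro i k
        rw [pow_succ, Matrix.mul_apply]
        simp only [ih]
        have := A_step hunit (fun i j : ℕ => if i = j then 1 else if 0 < i ∧ i ≤ j ∧ j < n then
          Ring.inverse ((Nat.factorial (j - i) : ℕ) : R) else 0) (fun _ _ => rfl) (N : R)
          i.isLt k.isLt
        rw [Finset.sum_range] at this
        simp only [hA]
        push_cast
        exact this
    intro i k _
    exact key i k
  · obtain ⟨C, hC⟩ : ∃ C : Matrix (Fin (n + 1)) (Fin (n + 1)) R,
          C = Matrix.single (⟨0, by omega⟩ : Fin (n + 1)) ⟨1, by omega⟩ (1 : R)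
            + Matrix.single (⟨n - 1, by omega⟩ : Fin (n + 1)) ⟨n, by omega⟩ 1 := ⟨_, rfl⟩
    have hBC : B = 1 + C := by rw [hB, hC, add_assoc]
    have hCC : C * C = 0 := by
      rw [hC, add_mul, mul_add, mul_add]
      rw [Matrix.single_mul_single_of_ne, Matrix.single_mul_single_of_ne,
        Matrix.single_mul_single_of_ne, Matrix.single_mul_single_of_ne]
      · simp
      all_goals simp only [ne_eq, Fin.mk.injEq]; omega
    have hpow : ∀ N : ℕ, B ^ N = 1 + (N : R) • C := by
      intro N
      induction N with
      | zero => simp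
      | succ N ih =>
        rw [pow_succ, ih, hBC, mul_add, add_mul, add_mul, smul_mul_assoc, smul_mul_assoc, hCC]
        push_cast
        simp [add_smul]
        abel
    have hCz : ∀ i k : Fin (n + 1), (k : ℕ) ≠ i + 1 → C i k = 0 := by
      intro i k h
      rw [hC, Matrix.add_apply, Matrix.single_apply, Matrix.single_apply, if_neg, if_neg, add_zero]
      all_goals
        rintro ⟨h1, h2⟩
        rw [Fin.ext_iff] at h1 h2
        simp only at h1 h2
        omega
    intro i k _
    rw [hpow, hBC, Matrix.add_apply, Matrix.add_apply, Matrix.smul_apply, smul_eq_mul]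
    by_cases h : (k : ℕ) = i + 1
    · have hne : i ≠ k := fun e => by subst e; omega
      rw [Matrix.one_apply_ne hne, h, Nat.add_sub_cancel_left]; ring
    · rw [hCz i k h]
      by_cases h2 : i = k
      · subst h2; simp
      · have h' : (i : ℕ) ≠ k := fun e => h2 (Fin.ext e)
        rw [Matrix.one_apply_ne h2]; simp
end

section
/- The matrix B is central in V′ modulo Z: for every C ∈ V′, the commutator B C B⁻¹ C⁻¹ lies in Z, i.e., there exists m ∈ R with B C B⁻¹ C⁻¹ = 1 + m·E_{1,n+1}. -/
/-- Membership in the group `U` of upper-triangular `(n+1)×(n+1)` matrices with all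
diagonal entries equal to `1` (indices 0-based). -/
def MemU {n : ℕ} {R : Type*} [CommRing R] (M : Matrix (Fin (n + 1)) (Fin (n + 1)) R) : Prop :=
  (∀ i j : Fin (n + 1), (j : ℕ) < (i : ℕ) → M i j = 0) ∧ (∀ i : Fin (n + 1), M i i = 1)

/-- Membership in `V′`. -/
def MemV {n : ℕ} {R : Type*} [CommRing R] (M : Matrix (Fin (n + 1)) (Fin (n + 1)) R) : Prop :=
  MemU M ∧ ∀ i j : Fin (n + 1), 0 < (i : ℕ) → (j : ℕ) < n → i ≠ j → M i j = 0

theorem aux_left {n : ℕ} {R : Type*} [CommRing R] (i j a b : Fin n) (m : R)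
    (C : Matrix (Fin n) (Fin n) R) :
    (Matrix.single i j m * C) a b = if a = i then m * C j b else 0 := by
  split_ifs with h
  · subst h; simp
  · simp [h]

theorem aux_right {n : ℕ} {R : Type*} [CommRing R] (i j a b : Fin n) (m : R)
    (C : Matrix (Fin n) (Fin n) R) :
    (C * Matrix.single i j m) a b = if b = j then C a i * m else 0 := by
  split_ifs with h
  · subst h; simp
  · simp [h]

theorem aux_det {n : ℕ} {R : Type*} [CommRing R]
    (M : Matrix (Fin (n + 1)) (Fin (n + 1)) R) (h : MemU M) : IsUnit M.det := by
  rw [Matrix.det_of_upperTriangular (fun i j hij => h.1 i j hij)]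
  simp [h.2]

/- STATEMENT 3: `B` is central in `V′` modulo `Z`: for every `C ∈ V′` there is `m ∈ R`
with `B * C * B⁻¹ * C⁻¹ = 1 + m • E_{1,n+1}` (which is `E_{0,n}` in 0-based indices). -/
theorem stmt_3 {n : ℕ} (hn : 3 ≤ n) {R : Type*} [CommRing R]
    (hunit : IsUnit ((Nat.factorial n : ℕ) : R))
    (B : Matrix (Fin (n + 1)) (Fin (n + 1)) R)
    (hB : B = 1 + Matrix.single (⟨0, by omega⟩ : Fin (n + 1)) ⟨1, by omega⟩ 1
            + Matrix.single (⟨n - 1, by omega⟩ : Fin (n + 1)) ⟨n, by omega⟩ 1)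
    (C : Matrix (Fin (n + 1)) (Fin (n + 1)) R) (hC : MemV C) :
    ∃ m : R, B * C * B⁻¹ * C⁻¹ =
      1 + Matrix.single (⟨0, by omega⟩ : Fin (n + 1)) ⟨n, by omega⟩ m := by
  obtain ⟨⟨hlow, hdiag⟩, hV⟩ := hC
  have hBU : MemU B := by
    subst hB
    constructor
    · intro i j hij
      simp only [Matrix.add_apply, Matrix.single_apply, Matrix.one_apply, Fin.ext_iff]
      rw [if_neg (by omega), if_neg (by omega), if_neg (by omega)]
      simp
    · intro i
      simp only [Matrix.add_apply, Matrix.single_apply, Matrix.one_apply, Fin.ext_iff]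
      rw [if_pos trivial, if_neg (by omega), if_neg (by omega)]
      simp
  have hBd := aux_det B hBU
  have hCd := aux_det C ⟨hlow, hdiag⟩
  let z : Fin (n + 1) := ⟨0, by omega⟩
  let o : Fin (n + 1) := ⟨1, by omega⟩
  let p : Fin (n + 1) := ⟨n - 1, by omega⟩
  let l : Fin (n + 1) := ⟨n, by omega⟩
  have hEC : ∀ m : R, Matrix.single z l m * C = Matrix.single z l m := by
    intro m
    ext a b
    rw [aux_left, Matrix.single_apply]
    by_cases ha : a = z
    · by_cases hb : b = l
      · subst ha hb; simp [hdiag]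
      · have : C l b = 0 := hlow _ _ (by
          have : (b : ℕ) ≠ n := fun h => hb (Fin.ext h)
          show (b : ℕ) < n
          omega)
        simp [this, Ne.symm hb]
    · simp [ha, Ne.symm ha]
  have hEB : ∀ m : R, Matrix.single z l m * B = Matrix.single z l m := by
    intro m
    have h1 : l ≠ z := by simp [l, z, Fin.ext_iff]; omega
    have h2 : l ≠ p := by simp [l, p, Fin.ext_iff]; omega
    rw [hB, mul_add, mul_add, mul_one, Matrix.single_mul_single_of_ne _ _ _ _ h1,
      Matrix.single_mul_single_of_ne _ _ _ _ h2]
    simp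
  have hNC : Matrix.single z o (1 : R) * C + Matrix.single p l 1 * C
      = C * Matrix.single z o 1 + C * Matrix.single p l 1
        + Matrix.single z l (C o l - C z p) := by
    ext a b
    simp only [Matrix.add_apply, aux_left, aux_right, Matrix.single_apply, one_mul, mul_one]
    have ho : ∀ b, b ≠ o → b ≠ l → C o b = 0 := fun b h1 h2 => hV o b (by simp [o]) (by
      have : (b : ℕ) ≠ n := fun h => h2 (Fin.ext h)
      omega) h1.symm
    have hl : ∀ b, b ≠ l → C l b = 0 := fun b h2 => hlow _ _ (by
      have : (b : ℕ) ≠ n := fun h => h2 (Fin.ext h)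
      show (b : ℕ) < n
      omega)
    have hz : ∀ a, a ≠ z → C a z = 0 := fun a h => hlow _ _ (by
      have : (a : ℕ) ≠ 0 := fun h' => h (Fin.ext h')
      show 0 < (a : ℕ)
      omega)
    have hp : ∀ a, a ≠ z → a ≠ p → C a p = 0 := fun a h h2 => hV a p (by
      have : (a : ℕ) ≠ 0 := fun h' => h (Fin.ext h')
      omega) (by show n - 1 < n; omega) h2
    have d1 : z ≠ p := by simp [z, p, Fin.ext_iff]; omega
    have d2 : o ≠ l := by simp [o, l, Fin.ext_iff]; omega
    clear_value z o p l
    grind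
  refine ⟨C o l - C z p, ?_⟩
  have hcomm : B * C = (1 + Matrix.single z l (C o l - C z p)) * (C * B) := by
    rw [add_mul, one_mul, ← mul_assoc, hEC, hEB]
    have e : B = 1 + Matrix.single z o 1 + Matrix.single p l 1 := hB
    rw [e, add_mul, add_mul, mul_add, mul_add, one_mul, mul_one, add_assoc, hNC]
    abel
  rw [hcomm, ← mul_assoc, Matrix.mul_nonsing_inv_cancel_right _ _ hBd,
    Matrix.mul_nonsing_inv_cancel_right _ _ hCd]
end

section
/- For every C ∈ V′, the commutator of B and C is given explicitly by B C B⁻¹ C⁻¹ = 1 + (C_{2,n+1} − C_{1,n})·E_{1,n+1}. -/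
/-- Matrices in `U` have invertible determinant. -/
lemma MemU.isUnit_det {n : ℕ} {R : Type*} [CommRing R]
    {M : Matrix (Fin (n + 1)) (Fin (n + 1)) R} (h : MemU M) : IsUnit M.det := by
  have ht : M.BlockTriangular id := fun i j hij => h.1 i j hij
  rw [Matrix.det_of_upperTriangular ht]
  simp [h.2]

/-- The last row of a matrix in `U` is the last unit vector. -/
lemma MemU.single_mul {n : ℕ} {R : Type*} [CommRing R]
    {M : Matrix (Fin (n + 1)) (Fin (n + 1)) R} (h : MemU M) (i l : Fin (n + 1))
    (hl : (l : ℕ) = n) (d : R) :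
    Matrix.single i l d * M = Matrix.single i l d := by
  ext a b
  by_cases ha : a = i
  · subst ha
    rw [Matrix.single_mul_apply_same]
    by_cases hb : b = l
    · subst hb; simp [h.2]
    · have : (b : ℕ) < l := by
        have h1 := b.2
        have h2 : (b : ℕ) ≠ l := fun e => hb (Fin.ext e)
        omega
      rw [h.1 l b this, Matrix.single_apply_of_col_ne _ _ (Ne.symm hb)]; simp
  · rw [Matrix.single_mul_apply_of_ne _ _ _ _ _ ha, Matrix.single_apply_of_row_ne (Ne.symm ha)]

/- STATEMENT 4: for every `C ∈ V′`, the commutator of `B` and `C` is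
`B C B⁻¹ C⁻¹ = 1 + (C_{2,n+1} − C_{1,n}) • E_{1,n+1}`; in 0-based indices the entries are
`C_{1,n}` and `C_{0,n-1}`, and the elementary matrix is `E_{0,n}`. -/
theorem stmt_4 {n : ℕ} (hn : 3 ≤ n) {R : Type*} [CommRing R]
    (hunit : IsUnit ((Nat.factorial n : ℕ) : R))
    (B : Matrix (Fin (n + 1)) (Fin (n + 1)) R)
    (hB : B = 1 + Matrix.single (⟨0, by omega⟩ : Fin (n + 1)) ⟨1, by omega⟩ 1
            + Matrix.single (⟨n - 1, by omega⟩ : Fin (n + 1)) ⟨n, by omega⟩ 1)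
    (C : Matrix (Fin (n + 1)) (Fin (n + 1)) R) (hC : MemV C) :
    B * C * B⁻¹ * C⁻¹ =
      1 + Matrix.single (⟨0, by omega⟩ : Fin (n + 1)) ⟨n, by omega⟩
        (C ⟨1, by omega⟩ ⟨n, by omega⟩ - C ⟨0, by omega⟩ ⟨n - 1, by omega⟩) := by
  obtain ⟨hU, hV⟩ := hC
  have hBU : MemU B := by
    subst hB
    constructor
    · intro i j hij
      simp only [Matrix.add_apply, Matrix.one_apply, Matrix.single_apply, Fin.ext_iff]
      rw [if_neg (by omega), if_neg (by omega), if_neg (by omega)]; simp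
    · intro i
      simp only [Matrix.add_apply, Matrix.one_apply, Matrix.single_apply, Fin.ext_iff]
      rw [if_pos trivial, if_neg (by omega), if_neg (by omega)]; simp
  have key : B * C = (1 + Matrix.single (⟨0, by omega⟩ : Fin (n + 1)) ⟨n, by omega⟩
        (C ⟨1, by omega⟩ ⟨n, by omega⟩ - C ⟨0, by omega⟩ ⟨n - 1, by omega⟩)) * (C * B) := by
    rw [add_mul, one_mul, ← Matrix.mul_assoc, hU.single_mul _ _ rfl, hBU.single_mul _ _ rfl]
    rw [hB]
    simp only [add_mul, mul_add, one_mul, mul_one]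
    have e1 : Matrix.single (⟨0, by omega⟩ : Fin (n + 1)) ⟨1, by omega⟩ 1 * C
        = Matrix.single (⟨0, by omega⟩ : Fin (n + 1)) ⟨1, by omega⟩ 1
          + Matrix.single (⟨0, by omega⟩ : Fin (n + 1)) ⟨n, by omega⟩
            (C ⟨1, by omega⟩ ⟨n, by omega⟩) := by
      ext a b
      by_cases ha : a = ⟨0, by omega⟩
      · subst ha
        rw [Matrix.single_mul_apply_same]
        simp only [Matrix.add_apply, Matrix.single_apply, true_and, one_mul]
        by_cases h1 : (⟨1, by omega⟩ : Fin (n + 1)) = b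
        · subst h1
          rw [if_pos rfl, if_neg (by simp only [Fin.ext_iff]; omega), hU.2]; simp
        · rw [if_neg h1]
          by_cases h2 : (⟨n, by omega⟩ : Fin (n + 1)) = b
          · subst h2; simp
          · rw [if_neg h2, hV _ _ (by simp) _ h1]; · simp
            have := b.2
            have h3 : n ≠ (b : ℕ) := fun e => h2 (Fin.ext e)
            omega
      · rw [Matrix.single_mul_apply_of_ne _ _ _ _ _ ha, Matrix.add_apply,
          Matrix.single_apply_of_row_ne (Ne.symm ha), Matrix.single_apply_of_row_ne (Ne.symm ha)]
        simp
    have e2 : C * Matrix.single (⟨n - 1, by omega⟩ : Fin (n + 1)) ⟨n, by omega⟩ 1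
        = Matrix.single (⟨n - 1, by omega⟩ : Fin (n + 1)) ⟨n, by omega⟩ 1
          + Matrix.single (⟨0, by omega⟩ : Fin (n + 1)) ⟨n, by omega⟩
            (C ⟨0, by omega⟩ ⟨n - 1, by omega⟩) := by
      ext a b
      by_cases hb : b = ⟨n, by omega⟩
      · subst hb
        rw [Matrix.mul_single_apply_same]
        simp only [Matrix.add_apply, Matrix.single_apply, and_true, mul_one]
        by_cases h1 : (⟨n - 1, by omega⟩ : Fin (n + 1)) = a
        · subst h1
          rw [if_pos rfl, if_neg (by simp only [Fin.ext_iff]; omega), hU.2]; simp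
        · rw [if_neg h1]
          by_cases h2 : (⟨0, by omega⟩ : Fin (n + 1)) = a
          · subst h2; simp
          · rw [if_neg h2, hV _ _ _ (by simp only []; omega) (Ne.symm h1)]; · simp
            have h3 : 0 ≠ (a : ℕ) := fun e => h2 (Fin.ext e)
            omega
      · rw [Matrix.mul_single_apply_of_ne _ _ _ _ _ hb, Matrix.add_apply,
          Matrix.single_apply_of_col_ne _ _ (Ne.symm hb),
          Matrix.single_apply_of_col_ne _ _ (Ne.symm hb)]
        simp
    have e3 : C * Matrix.single (⟨0, by omega⟩ : Fin (n + 1)) ⟨1, by omega⟩ 1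
        = Matrix.single (⟨0, by omega⟩ : Fin (n + 1)) ⟨1, by omega⟩ 1 := by
      ext a b
      by_cases hb : b = ⟨1, by omega⟩
      · subst hb
        rw [Matrix.mul_single_apply_same]
        simp only [Matrix.single_apply, and_true, mul_one]
        by_cases h2 : (⟨0, by omega⟩ : Fin (n + 1)) = a
        · subst h2; rw [if_pos rfl, hU.2]
        · rw [if_neg h2, hU.1]
          have h3 : 0 ≠ (a : ℕ) := fun e => h2 (Fin.ext e)
          simp only []
          omega
      · rw [Matrix.mul_single_apply_of_ne _ _ _ _ _ hb,
          Matrix.single_apply_of_col_ne _ _ (Ne.symm hb)]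
    rw [e1, hU.single_mul _ _ rfl, e2, e3, sub_eq_add_neg, Matrix.single_add, ← Matrix.single_neg]
    abel
  rw [key, ← Matrix.mul_assoc, Matrix.mul_nonsing_inv_cancel_right _ _ hBU.isUnit_det,
    Matrix.mul_nonsing_inv_cancel_right _ _ hU.isUnit_det]
end

section
/- Let D be a strictly upper-triangular (n+1)×(n+1) matrix over R satisfying D_{i,j} = 0 whenever i > 1 and j < n+1. Then B·(1+D)·B⁻¹ = 1 + D + (D_{2,n+1} − D_{1,n})·E_{1,n+1}. -/
/- STATEMENT 6: if `D` is strictly upper triangular with `D_{i,j} = 0` whenever `i > 1`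
and `j < n+1` (1-based; `0 < i`, `j < n` in 0-based indices), then
`B·(1+D)·B⁻¹ = 1 + D + (D_{2,n+1} − D_{1,n})·E_{1,n+1}`, which in 0-based indices reads
`1 + D + (D_{1,n} − D_{0,n-1})·E_{0,n}`. -/
theorem stmt_6 {n : ℕ} (hn : 3 ≤ n) {R : Type*} [CommRing R]
    (D : Matrix (Fin (n + 1)) (Fin (n + 1)) R)
    (hDtri : ∀ i j : Fin (n + 1), (j : ℕ) ≤ (i : ℕ) → D i j = 0)
    (hDstar : ∀ i j : Fin (n + 1), 0 < (i : ℕ) → (j : ℕ) < n → D i j = 0)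
    (B : Matrix (Fin (n + 1)) (Fin (n + 1)) R)
    (hB : B = 1 + Matrix.single (⟨0, by omega⟩ : Fin (n + 1)) ⟨1, by omega⟩ 1
            + Matrix.single (⟨n - 1, by omega⟩ : Fin (n + 1)) ⟨n, by omega⟩ 1) :
    B * (1 + D) * B⁻¹ =
      1 + D + Matrix.single (⟨0, by omega⟩ : Fin (n + 1)) ⟨n, by omega⟩
        (D ⟨1, by omega⟩ ⟨n, by omega⟩ - D ⟨0, by omega⟩ ⟨n - 1, by omega⟩) := by
  have h1 : (⟨n - 1, by omega⟩ : Fin (n + 1)) ≠ ⟨1, by omega⟩ := by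
    simp only [ne_eq, Fin.mk.injEq]; omega
  have h2 : (⟨n, by omega⟩ : Fin (n + 1)) ≠ ⟨0, by omega⟩ := by
    simp only [ne_eq, Fin.mk.injEq]; omega
  have h3 : (⟨n, by omega⟩ : Fin (n + 1)) ≠ ⟨n - 1, by omega⟩ := by
    simp only [ne_eq, Fin.mk.injEq]; omega
  have h4 : (⟨1, by omega⟩ : Fin (n + 1)) ≠ ⟨0, by omega⟩ := by
    simp only [ne_eq, Fin.mk.injEq]; omega
  have hz : ∀ i : Fin (n + 1), D i ⟨0, by omega⟩ = 0 := fun i => hDtri _ _ (Nat.zero_le _)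
  have hl : ∀ j : Fin (n + 1), D ⟨n, by omega⟩ j = 0 := fun j => hDtri _ _ (by
    have := j.2
    simp only; omega)
  have hr : ∀ j : Fin (n + 1), j ≠ ⟨n, by omega⟩ → D ⟨1, by omega⟩ j = 0 := fun j hj =>
    hDstar _ _ (by simp) (by
      have := j.2
      simp only [ne_eq, Fin.ext_iff] at hj
      omega)
  have hc : ∀ i : Fin (n + 1), i ≠ ⟨0, by omega⟩ → D i ⟨n - 1, by omega⟩ = 0 := fun i hi =>
    hDstar _ _ (by
      simp only [ne_eq, Fin.ext_iff] at hi
      omega) (by simp only; omega)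
  generalize (⟨0, by omega⟩ : Fin (n + 1)) = a at *
  generalize (⟨1, by omega⟩ : Fin (n + 1)) = b at *
  generalize (⟨n - 1, by omega⟩ : Fin (n + 1)) = c at *
  generalize (⟨n, by omega⟩ : Fin (n + 1)) = d at *
  have e1 : Matrix.single a b (1 : R) * D = Matrix.single a d (D b d) := by
    ext i j
    by_cases hi : i = a
    · subst hi
      by_cases hj : j = d
      · subst hj; simp
      · simp [hr j hj, Matrix.single_apply, Ne.symm hj]
    · simp [hi, Matrix.single_apply, Ne.symm hi]
  have e2 : Matrix.single c d (1 : R) * D = 0 := by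
    ext i j
    by_cases hi : i = c
    · subst hi; simp [hl]
    · simp [hi]
  have e3 : D * Matrix.single a b (1 : R) = 0 := by
    ext i j
    by_cases hj : j = b
    · subst hj; simp [hz]
    · simp [hj]
  have e4 : D * Matrix.single c d (1 : R) = Matrix.single a d (D a c) := by
    ext i j
    by_cases hj : j = d
    · subst hj
      by_cases hi : i = a
      · subst hi; simp
      · simp [hc i hi, Matrix.single_apply, Ne.symm hi]
    · simp [hj, Matrix.single_apply, Ne.symm hj]
  have hinv : B * (1 - Matrix.single a b 1 - Matrix.single c d 1) = 1 := by
    rw [hB]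
    simp only [mul_sub, add_mul, one_mul, mul_one,
      Matrix.single_mul_single_of_ne _ _ _ _ h4, Matrix.single_mul_single_of_ne _ _ _ _ h1.symm,
      Matrix.single_mul_single_of_ne _ _ _ _ h2, Matrix.single_mul_single_of_ne _ _ _ _ h3]
    abel
  have hdet : IsUnit B.det := Matrix.isUnit_det_of_right_inverse hinv
  have hs : Matrix.single a d (D b d) = Matrix.single a d (D b d - D a c)
      + Matrix.single a d (D a c) := by
    rw [← Matrix.single_add, sub_add_cancel]
  have key : B * (1 + D) = (1 + D + Matrix.single a d (D b d - D a c)) * B := by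
    rw [hB]
    simp only [mul_add, add_mul, one_mul, mul_one, e1, e2, e3, e4,
      Matrix.single_mul_single_of_ne _ _ _ _ h2, Matrix.single_mul_single_of_ne _ _ _ _ h3]
    rw [hs]
    generalize Matrix.single a d (D b d - D a c) = X
    abel
  rw [key, Matrix.mul_nonsing_inv_cancel_right _ _ hdet]
end

section
/- For every element γ of the commutator subgroup of the free group F on two generators x and y, the matrix φ(γ) lies in V′, i.e., φ(γ)_{i,j} = 0 whenever i > 1, j < n+1, and i ≠ j. -/
/- STATEMENT 7: for the homomorphism `φ` from the free group on two generators `x`, `y`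
(modelled as `FreeGroup Bool` with `x = of false`, `y = of true`) to the matrix ring,
with `φ x = A` and `φ y = B`, every element `γ` of the commutator subgroup has `φ γ ∈ V′`,
i.e. `φ γ` has vanishing `(i,j)` entry whenever `i > 1`, `j < n+1`, `i ≠ j` (1-based),
that is `0 < i`, `j < n`, `i ≠ j` in the 0-based `Fin (n+1)` indices used here. -/
theorem stmt_7 {n : ℕ} (hn : 3 ≤ n) {R : Type*} [CommRing R]
    (hunit : IsUnit ((Nat.factorial n : ℕ) : R))
    (A B : Matrix (Fin (n + 1)) (Fin (n + 1)) R)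
    (hA : ∀ i j : Fin (n + 1), A i j =
      if (i : ℕ) = (j : ℕ) then 1
      else if 0 < (i : ℕ) ∧ (i : ℕ) ≤ (j : ℕ) ∧ (j : ℕ) < n then
        Ring.inverse ((Nat.factorial ((j : ℕ) - (i : ℕ)) : ℕ) : R)
      else 0)
    (hB : B = 1 + Matrix.single (⟨0, by omega⟩ : Fin (n + 1)) ⟨1, by omega⟩ 1
            + Matrix.single (⟨n - 1, by omega⟩ : Fin (n + 1)) ⟨n, by omega⟩ 1)
    (φ : FreeGroup Bool →* Matrix (Fin (n + 1)) (Fin (n + 1)) R)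
    (hφx : φ (FreeGroup.of false) = A) (hφy : φ (FreeGroup.of true) = B)
    (γ : FreeGroup Bool) (hγ : γ ∈ commutator (FreeGroup Bool)) :
    ∀ i j : Fin (n + 1), 0 < (i : ℕ) → (j : ℕ) < n → i ≠ j → φ γ i j = 0 := by
  have hAtri : A.BlockTriangular id := by
    intro i j hij
    have h : (j : ℕ) < (i : ℕ) := hij
    rw [hA, if_neg (by omega), if_neg (by omega)]
  have hBtri : B.BlockTriangular id := by
    intro i j hij
    have h : (j : ℕ) < (i : ℕ) := hij
    have h3 : i ≠ j := by rintro rfl; omega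
    rw [hB]
    simp only [Matrix.add_apply, Matrix.one_apply, Matrix.single_apply, Fin.ext_iff]
    rw [if_neg (by omega), if_neg (by omega), if_neg (by omega)]
    simp
  have hgen : ∀ b : Bool, (φ (FreeGroup.of b)).BlockTriangular id := by
    intro b
    cases b
    · rw [hφx]; exact hAtri
    · rw [hφy]; exact hBtri
  have htri : ∀ g, (φ g).BlockTriangular id := by
    intro g
    induction g using FreeGroup.induction_on with
    | C1 => rw [map_one]; exact Matrix.blockTriangular_one
    | of b => exact hgen b
    | inv_of b _ =>
      have h1 : φ (FreeGroup.of b)⁻¹ * φ (FreeGroup.of b) = 1 := by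
        rw [← map_mul]; simp
      have h2 : φ (FreeGroup.of b) * φ (FreeGroup.of b)⁻¹ = 1 := by
        rw [← map_mul]; simp
      letI : Invertible (φ (FreeGroup.of b)) := ⟨_, h1, h2⟩
      have h3 := Matrix.blockTriangular_inv_of_blockTriangular (hgen b)
      rwa [Matrix.inv_eq_left_inv h1] at h3
    | mul a b ha hb => rw [map_mul]; exact ha.mul hb
  let ι := {i : Fin (n + 1) // 0 < (i : ℕ) ∧ (i : ℕ) < n}
  let ψ : FreeGroup Bool →* Matrix ι ι R :=
    { toFun := fun g => (φ g).submatrix Subtype.val Subtype.val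
      map_one' := by
        rw [map_one]; exact Matrix.submatrix_one _ Subtype.val_injective
      map_mul' := by
        intro a b
        ext i j
        rw [map_mul, Matrix.submatrix_apply, Matrix.mul_apply, Matrix.mul_apply]
        simp only [Matrix.submatrix_apply]
        rw [← Finset.sum_subtype (Finset.univ.filter
            fun k : Fin (n + 1) => 0 < (k : ℕ) ∧ (k : ℕ) < n)
          (by simp) (fun k => φ a i.1 k * φ b k j.1)]
        symm
        apply Finset.sum_subset (Finset.subset_univ _)
        intro k _ hk
        have hi := i.2
        have hj := j.2
        have hk' : ¬ (0 < (k : ℕ) ∧ (k : ℕ) < n) := by simpa using hk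
        by_cases hk0 : (k : ℕ) < (i.1 : ℕ)
        · rw [htri a (show id k < id i.1 from hk0), zero_mul]
        · rw [htri b (show id j.1 < id k from (show (j.1 : ℕ) < (k : ℕ) by omega)), mul_zero] }
  have hψy : ψ (FreeGroup.of true) = 1 := by
    ext i j
    change φ (FreeGroup.of true) i.1 j.1 = _
    have hi := i.2
    have hj := j.2
    rw [hφy, hB]
    simp only [Matrix.add_apply, Matrix.one_apply, Matrix.single_apply, Fin.ext_iff]
    rw [if_neg (c := _ ∧ _) (by omega), if_neg (c := _ ∧ _) (by omega)]
    have he : ((i.1 : ℕ) = (j.1 : ℕ)) ↔ i = j := by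
      rw [← Fin.ext_iff, ← Subtype.ext_iff]
    simp [he]
  let χ : FreeGroup Bool →* Multiplicative ℤ :=
    FreeGroup.lift fun b => if b then 1 else Multiplicative.ofAdd 1
  have hfac : ψ.toHomUnits =
      (zpowersHom _ (ψ.toHomUnits (FreeGroup.of false))).comp χ := by
    apply FreeGroup.ext_hom
    intro b
    cases b
    · simp [χ]
    · ext1
      simp [χ, hψy]
  have hχ : χ γ = 1 := Abelianization.commutator_subset_ker χ hγ
  have hψγ : ψ γ = 1 := by
    rw [← MonoidHom.coe_toHomUnits, hfac]
    simp [hχ]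
  intro i j hi hj hij
  by_cases hlt : j < i
  · exact htri γ hlt
  · have h1 : (i : ℕ) ≤ (j : ℕ) := by simpa using hlt
    have h2 := congrFun (congrFun hψγ ⟨i, hi, by omega⟩) ⟨j, by omega, hj⟩
    rw [Matrix.one_apply_ne (by simpa using hij)] at h2
    exact h2
end

section
/- Let c be a positive integer, let f be an element of the commutator subgroup of F, and let σ : F → F be the group homomorphism determined by σ(x) = x^c and σ(y) = f⁻¹ y^c f. Let τ_c : U → U be the map sending a matrix M to the matrix whose (i,j) entry is c^{j−i}·M_{i,j}. Then for every w ∈ F there exists m ∈ R such that φ(σ(w)) = τ_c(φ(w)) · (1 + m·E_{1,n+1}); that is, φ intertwines σ with τ_c modulo the subgroup Z. (This is the discrete form of the Proposition that φ : π → Ū_{n+1} is Galois-equivariant.) -/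
namespace Stmt8

variable {n : ℕ} {R : Type*} [CommRing R]

/-- Upper unitriangular matrices. -/
def T (n : ℕ) (R : Type*) [CommRing R] : Submonoid (Matrix (Fin (n + 1)) (Fin (n + 1)) R) where
  carrier := {M | (∀ i j : Fin (n + 1), j < i → M i j = 0) ∧ ∀ i, M i i = 1}
  one_mem' := by
    refine ⟨fun i j h => ?_, fun i => by simp⟩
    exact Matrix.one_apply_ne (ne_of_gt h)
  mul_mem' := by
    rintro a b ⟨ha, ha'⟩ ⟨hb, hb'⟩
    refine ⟨fun i j h => ?_, fun i => ?_⟩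
    · rw [Matrix.mul_apply]
      refine Finset.sum_eq_zero fun k _ => ?_
      rcases lt_or_ge k i with hk | hk
      · rw [ha i k hk, zero_mul]
      · rw [hb k j (lt_of_lt_of_le h hk), mul_zero]
    · rw [Matrix.mul_apply, Finset.sum_eq_single i]
      · rw [ha', hb', one_mul]
      · intro k _ hk
        rcases lt_or_gt_of_ne hk with hk | hk
        · rw [ha i k hk, zero_mul]
        · rw [hb k i hk, mul_zero]
      · simp

lemma T_inv {a b : Matrix (Fin (n + 1)) (Fin (n + 1)) R} (ha : a ∈ T n R) (h : a * b = 1) :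
    b ∈ T n R := by
  have hb : a⁻¹ = b := Matrix.inv_eq_right_inv h
  have hba : b * a = 1 := mul_eq_one_comm.mp h
  let _ : Invertible a := ⟨b, hba, h⟩
  have hbt : ∀ i j : Fin (n + 1), j < i → b i j = 0 := by
    have h1 : Matrix.BlockTriangular a (id : Fin (n+1) → Fin (n+1)) := fun i j hij => ha.1 i j hij
    have h2 := Matrix.blockTriangular_inv_of_blockTriangular h1
    rw [hb] at h2
    exact fun i j hij => h2 hij
  refine ⟨hbt, fun i => ?_⟩
  have h3 := congrFun (congrFun h i) i
  rw [Matrix.mul_apply, Finset.sum_eq_single i] at h3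
  · simpa [ha.2] using h3
  · intro k _ hk
    rcases lt_or_gt_of_ne hk with hk | hk
    · rw [ha.1 i k hk, zero_mul]
    · rw [hbt k i hk, mul_zero]
  · simp

/-- The congruence of agreeing on entries in D, for a set D closed under subintervals. -/
def con (D : Fin (n + 1) → Fin (n + 1) → Prop)
    (hD : ∀ i k j, i ≤ k → k ≤ j → D i j → D i k ∧ D k j) : Con (T n R) where
  r a b := ∀ i j, D i j → a.1 i j = b.1 i j
  iseqv := ⟨fun _ _ _ _ => rfl, fun h i j hd => (h i j hd).symm,
    fun h h' i j hd => (h i j hd).trans (h' i j hd)⟩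
  mul' := by
    intro a b c d h h' i j hd
    change (a.1 * c.1) i j = (b.1 * d.1) i j
    rw [Matrix.mul_apply, Matrix.mul_apply]
    refine Finset.sum_congr rfl fun k _ => ?_
    rcases lt_or_ge k i with hk | hk
    · rw [a.2.1 i k hk, b.2.1 i k hk, zero_mul, zero_mul]
    rcases lt_or_ge j k with hk' | hk'
    · rw [c.2.1 k j hk', d.2.1 k j hk', mul_zero, mul_zero]
    rw [h i k (hD i k j hk hk' hd).1, h' k j (hD i k j hk hk' hd).2]

/-- The scaling map. -/
def tau (c : R) : T n R →* T n R where
  toFun a := ⟨Matrix.of fun i j : Fin (n + 1) => c ^ ((j : ℕ) - (i : ℕ)) * a.1 i j,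
    fun i j h => by simp [a.2.1 i j h], fun i => by simp [a.2.2 i]⟩
  map_one' := by
    ext i j
    by_cases h : i = j
    · subst h; simp
    · simp [Matrix.one_apply_ne h]
  map_mul' := by
    intro a b
    ext i j
    simp only [Matrix.of_apply, Submonoid.coe_mul, Matrix.mul_apply, Finset.mul_sum]
    refine Finset.sum_congr rfl fun k _ => ?_
    rcases lt_or_ge k i with hk | hk
    · simp [a.2.1 i k hk]
    rcases lt_or_ge j k with hk' | hk'
    · simp [b.2.1 k j hk']
    have : (j : ℕ) - i = (k - i) + (j - k) := by
      have h1 : (i : ℕ) ≤ k := hk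
      have h2 : (k : ℕ) ≤ j := hk'
      omega
    rw [this, pow_add]; ring

lemma isUnit_fact (hunit : IsUnit ((Nat.factorial n : ℕ) : R)) {d : ℕ} (h : d ≤ n) :
    IsUnit ((Nat.factorial d : ℕ) : R) := by
  refine isUnit_of_dvd_unit ?_ hunit
  exact_mod_cast Nat.cast_dvd_cast (α := R) (Nat.factorial_dvd_factorial h)

lemma inv_fact (hunit : IsUnit ((Nat.factorial n : ℕ) : R)) {d m : ℕ} (h : d ≤ n) (hm : m ≤ d) :
    Ring.inverse ((Nat.factorial m : ℕ) : R) * Ring.inverse ((Nat.factorial (d - m) : ℕ) : R) =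
      (d.choose m : R) * Ring.inverse ((Nat.factorial d : ℕ) : R) := by
  have h1 := isUnit_fact hunit h
  have h2 := isUnit_fact hunit (hm.trans h)
  have h3 := isUnit_fact hunit ((Nat.sub_le d m).trans h)
  have e1 := Ring.mul_inverse_cancel _ h1
  have e2 := Ring.mul_inverse_cancel _ h2
  have e3 := Ring.mul_inverse_cancel _ h3
  have e : (d.choose m : R) * (m.factorial : R) * ((d-m).factorial : R) = (d.factorial : R) := by
    exact_mod_cast congrArg (Nat.cast (R := R)) (Nat.choose_mul_factorial_mul_factorial hm)
  refine h1.mul_left_cancel ?_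
  calc _ = (d.choose m : R) * (m.factorial * Ring.inverse (m.factorial : R)) *
        ((d-m).factorial * Ring.inverse ((d-m).factorial : R)) := by rw [← e]; ring
    _ = (d.choose m : R) * (d.factorial * Ring.inverse (d.factorial : R)) := by
        rw [e1, e2, e3]; ring
    _ = _ := by ring

lemma A_pow (hunit : IsUnit ((Nat.factorial n : ℕ) : R))
    (A : Matrix (Fin (n + 1)) (Fin (n + 1)) R)
    (hA : ∀ i j : Fin (n + 1), A i j =
      if (i : ℕ) = (j : ℕ) then 1
      else if 0 < (i : ℕ) ∧ (i : ℕ) ≤ (j : ℕ) ∧ (j : ℕ) < n then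
        Ring.inverse ((Nat.factorial ((j : ℕ) - (i : ℕ)) : ℕ) : R)
      else 0) (c : ℕ) (i j : Fin (n + 1)) :
    (A ^ c) i j = (c : R) ^ ((j : ℕ) - (i : ℕ)) * A i j := by
  induction c generalizing i j with
  | zero =>
    by_cases h : i = j
    · subst h; simp [hA]
    · rw [pow_zero, Matrix.one_apply_ne h]
      rcases lt_or_gt_of_ne h with h' | h'
      · have : (j : ℕ) - i ≠ 0 := by have : (i : ℕ) < j := h'
                                     omega
        simp [this]
      · have h'' : (j : ℕ) < i := h'
        rw [hA, if_neg (by omega), if_neg (by omega), mul_zero]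
  | succ k ih =>
    have hA' : ∀ i j : Fin (n + 1), A i j =
      if (i : ℕ) = (j : ℕ) ∨ (0 < (i : ℕ) ∧ (i : ℕ) ≤ (j : ℕ) ∧ (j : ℕ) < n) then
        Ring.inverse ((Nat.factorial ((j : ℕ) - (i : ℕ)) : ℕ) : R)
      else 0 := by
      intro i j
      rw [hA]
      by_cases h1 : (i : ℕ) = j
      · rw [if_pos h1, if_pos (Or.inl h1), h1]; simp
      · rw [if_neg h1]
        by_cases h2 : 0 < (i : ℕ) ∧ (i : ℕ) ≤ (j : ℕ) ∧ (j : ℕ) < n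
        · rw [if_pos h2, if_pos (Or.inr h2)]
        · rw [if_neg h2, if_neg (by tauto)]
    rw [pow_succ, Matrix.mul_apply]
    simp only [ih]
    by_cases hij : i = j
    · subst hij
      rw [Finset.sum_eq_single i]
      · simp [hA]
      · intro l _ hl
        have hl' : (l : ℕ) ≠ i := fun h => hl (Fin.ext h)
        rw [hA' i l, hA' l i]
        by_cases hl2 : (i : ℕ) ≤ l
        · rw [if_neg (c := (l : ℕ) = i ∨ _) (by omega), mul_zero]
        · rw [if_neg (by omega), mul_zero, zero_mul]
      · simp
    have hij' : (i : ℕ) ≠ j := fun h => hij (Fin.ext h)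
    by_cases hm : 0 < (i : ℕ) ∧ (i : ℕ) ≤ (j : ℕ) ∧ (j : ℕ) < n
    · obtain ⟨h0, h1, h2⟩ := hm
      set g : ℕ → R := fun l => if (i : ℕ) ≤ l ∧ l ≤ j then
        (k : R) ^ (l - (i : ℕ)) * Ring.inverse ((Nat.factorial (l - (i : ℕ)) : ℕ) : R) *
          Ring.inverse ((Nat.factorial ((j : ℕ) - l) : ℕ) : R) else 0 with hg
      have s1 : ∀ l : Fin (n + 1), (k : R) ^ ((l : ℕ) - (i : ℕ)) * A i l * A l j = g l := by
        intro l
        simp only [hg]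
        by_cases hl : (i : ℕ) ≤ l ∧ (l : ℕ) ≤ j
        · rw [hA' i l, hA' l j, if_pos (by omega), if_pos (by omega), if_pos hl]
        · rw [if_neg hl]
          rw [hA' i l, hA' l j]
          by_cases hl2 : (i : ℕ) ≤ l
          · rw [if_neg (c := (l : ℕ) = j ∨ _) (by omega), mul_zero]
          · rw [if_neg (by omega), mul_zero, zero_mul]
      rw [Finset.sum_congr rfl fun l _ => s1 l, Fin.sum_univ_eq_sum_range,
        ← Finset.sum_subset (s₁ := Finset.Ico (i : ℕ) (j + 1)), Finset.sum_Ico_eq_sum_range,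
        hA' i j, if_pos (by omega)]
      · obtain ⟨d, hd⟩ := Nat.exists_eq_add_of_le h1
        rw [hd]
        have : (i : ℕ) + d + 1 - i = d + 1 := by omega
        rw [this, Nat.add_sub_cancel_left, Nat.cast_succ, add_pow, Finset.sum_mul]
        refine Finset.sum_congr rfl fun m hmr => ?_
        have hm' : m ≤ d := by simpa [Nat.lt_succ_iff] using hmr
        simp only [hg]
        rw [if_pos (by omega), hd, Nat.add_sub_cancel_left, Nat.add_sub_add_left, mul_assoc,
          inv_fact hunit (by omega) hm']
        ring
      · intro l hl
        have := j.2
        simp at hl ⊢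
        omega
      · intro l _ hl
        simp only [Finset.mem_Ico] at hl
        simp only [hg]
        rw [if_neg (by omega)]
    · rw [hA' i j, if_neg (by omega), mul_zero]
      refine Finset.sum_eq_zero fun l _ => ?_
      rw [hA' i l, hA' l j]
      by_cases hl : (i : ℕ) = l ∨ (0 < (i : ℕ) ∧ (i : ℕ) ≤ l ∧ (l : ℕ) < n)
      · rw [if_neg (c := (l : ℕ) = j ∨ _) (by omega), mul_zero]
      · rw [if_neg hl, mul_zero, zero_mul]

lemma commute_all {Q : Type*} [Monoid Q] (q : FreeGroup Bool →* Q)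
    (h : Commute (q (FreeGroup.of false)) (q (FreeGroup.of true))) (u v : FreeGroup Bool) :
    Commute (q u) (q v) := by
  have inv_l : ∀ u v, Commute (q u) (q v) → Commute (q u⁻¹) (q v) := by
    intro u v h
    have h1 : q u⁻¹ * q u = 1 := by rw [← map_mul]; simp
    have h2 : q u * q u⁻¹ = 1 := by rw [← map_mul]; simp
    have h3 := h.eq
    calc q u⁻¹ * q v = q u⁻¹ * q v * (q u * q u⁻¹) := by rw [h2, mul_one]
      _ = q u⁻¹ * (q v * q u) * q u⁻¹ := by simp only [mul_assoc]
      _ = (q u⁻¹ * q u) * q v * q u⁻¹ := by rw [← h3]; simp only [mul_assoc]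
      _ = q v * q u⁻¹ := by rw [h1, one_mul]
  have ext_l : ∀ v, (∀ b, Commute (q (FreeGroup.of b)) (q v)) → ∀ u, Commute (q u) (q v) := by
    intro v hb u
    induction u using FreeGroup.induction_on with
    | C1 => simp
    | of b => exact hb b
    | inv_of b hb' => exact inv_l _ _ hb'
    | mul a b ha hb => rw [map_mul]; exact ha.mul_left hb
  refine ext_l v (fun b => (ext_l _ (fun b' => ?_) v).symm) u
  cases b <;> cases b'
  · exact Commute.refl _
  · exact h.symm
  · exact h
  · exact Commute.refl _

lemma kill {Q : Type*} [Monoid Q] (q : FreeGroup Bool →* Q)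
    (h : Commute (q (FreeGroup.of false)) (q (FreeGroup.of true))) (f : FreeGroup Bool)
    (hf : f ∈ commutator (FreeGroup Bool)) : q f = 1 := by
  have : commutator (FreeGroup Bool) ≤ q.ker := by
    rw [commutator_def, Subgroup.commutator_le]
    intro u _ v _
    rw [MonoidHom.mem_ker, commutatorElement_def, map_mul, map_mul, map_mul,
      (commute_all q h u v).eq, mul_assoc (q v), ← map_mul q u, mul_inv_cancel, map_one, mul_one,
      ← map_mul, mul_inv_cancel, map_one]
  exact this hf

lemma hom_ext {Q : Type*} [Monoid Q] (p q : FreeGroup Bool →* Q)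
    (h : ∀ b, p (FreeGroup.of b) = q (FreeGroup.of b)) (w : FreeGroup Bool) : p w = q w := by
  have : p.toHomUnits = q.toHomUnits := by
    ext b
    simpa using h b
  simpa using congrArg (fun r => ((r w : Qˣ) : Q)) this

lemma mul_single_ite (M : Matrix (Fin (n + 1)) (Fin (n + 1)) R) (p q a b : Fin (n + 1)) (c : R) :
    (M * Matrix.single p q c) a b = if b = q then M a p * c else 0 := by
  split_ifs with h
  · subst h; exact Matrix.mul_single_apply_same ..
  · exact Matrix.mul_single_apply_of_ne _ _ _ _ _ h _

lemma single_mul_ite (M : Matrix (Fin (n + 1)) (Fin (n + 1)) R) (p q a b : Fin (n + 1)) (c : R) :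
    (Matrix.single p q c * M) a b = if a = p then c * M q b else 0 := by
  split_ifs with h
  · subst h; exact Matrix.single_mul_apply_same ..
  · exact Matrix.single_mul_apply_of_ne _ _ _ _ _ h _

lemma B_comm (M : Matrix (Fin (n + 1)) (Fin (n + 1)) R) (p q r s i j : Fin (n + 1)) (c : R)
    (h1 : i = p → M q j = (1 : Matrix _ _ R) q j) (h2 : i = r → M s j = (1 : Matrix _ _ R) s j)
    (h3 : j = q → M i p = (1 : Matrix _ _ R) i p) (h4 : j = s → M i r = (1 : Matrix _ _ R) i r) :
    ((1 + Matrix.single p q c + Matrix.single r s c) * M) i j =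
      (M * (1 + Matrix.single p q c + Matrix.single r s c)) i j := by
  simp only [mul_add, add_mul, one_mul, mul_one, Matrix.add_apply, mul_single_ite, single_mul_ite]
  have e1 : (if i = p then c * M q j else 0) = if j = q then M i p * c else 0 := by
    by_cases hi : i = p <;> by_cases hj : j = q
    · rw [if_pos hi, if_pos hj, h1 hi, h3 hj, hi, hj, Matrix.one_apply_eq, Matrix.one_apply_eq, mul_one, one_mul]
    · rw [if_pos hi, if_neg hj, h1 hi, Matrix.one_apply_ne (Ne.symm hj), mul_zero]
    · rw [if_neg hi, if_pos hj, h3 hj, Matrix.one_apply_ne hi, zero_mul]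
    · rw [if_neg hi, if_neg hj]
  have e2 : (if i = r then c * M s j else 0) = if j = s then M i r * c else 0 := by
    by_cases hi : i = r <;> by_cases hj : j = s
    · rw [if_pos hi, if_pos hj, h2 hi, h4 hj, hi, hj, Matrix.one_apply_eq, Matrix.one_apply_eq, mul_one, one_mul]
    · rw [if_pos hi, if_neg hj, h2 hi, Matrix.one_apply_ne (Ne.symm hj), mul_zero]
    · rw [if_neg hi, if_pos hj, h4 hj, Matrix.one_apply_ne hi, zero_mul]
    · rw [if_neg hi, if_neg hj]
  rw [e1, e2]

end Stmt8


/- STATEMENT 8: with `φ : F → U` as before (`F = FreeGroup Bool`, `x = of false`,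
`y = of true`, `φ x = A`, `φ y = B`), let `c` be a positive integer, `f` an element of
the commutator subgroup of `F`, and `σ : F → F` the homomorphism with `σ x = x^c`,
`σ y = f⁻¹ y^c f`.  Let `τ_c` send a matrix `M` to the matrix with `(i,j)` entry
`c^(j−i)·M_{i,j}`.  Then for every `w ∈ F` there is `m ∈ R` with
`φ (σ w) = τ_c (φ w) * (1 + m·E_{1,n+1})` (the elementary matrix is `E_{0,n}` in the
0-based indices used here): `φ` intertwines `σ` with `τ_c` modulo `Z`. -/
theorem stmt_8 {n : ℕ} (hn : 3 ≤ n) {R : Type*} [CommRing R]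
    (hunit : IsUnit ((Nat.factorial n : ℕ) : R))
    (A B : Matrix (Fin (n + 1)) (Fin (n + 1)) R)
    (hA : ∀ i j : Fin (n + 1), A i j =
      if (i : ℕ) = (j : ℕ) then 1
      else if 0 < (i : ℕ) ∧ (i : ℕ) ≤ (j : ℕ) ∧ (j : ℕ) < n then
        Ring.inverse ((Nat.factorial ((j : ℕ) - (i : ℕ)) : ℕ) : R)
      else 0)
    (hB : B = 1 + Matrix.single (⟨0, by omega⟩ : Fin (n + 1)) ⟨1, by omega⟩ 1
            + Matrix.single (⟨n - 1, by omega⟩ : Fin (n + 1)) ⟨n, by omega⟩ 1)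
    (φ : FreeGroup Bool →* Matrix (Fin (n + 1)) (Fin (n + 1)) R)
    (hφx : φ (FreeGroup.of false) = A) (hφy : φ (FreeGroup.of true) = B)
    (c : ℕ) (hc : 0 < c)
    (f : FreeGroup Bool) (hf : f ∈ commutator (FreeGroup Bool))
    (σ : FreeGroup Bool →* FreeGroup Bool)
    (hσx : σ (FreeGroup.of false) = (FreeGroup.of false) ^ c)
    (hσy : σ (FreeGroup.of true) = f⁻¹ * (FreeGroup.of true) ^ c * f)
    (w : FreeGroup Bool) :
    ∃ m : R, φ (σ w) =
      (Matrix.of fun i j : Fin (n + 1) => (c : R) ^ ((j : ℕ) - (i : ℕ)) * φ w i j) *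
        (1 + Matrix.single (⟨0, by omega⟩ : Fin (n + 1)) ⟨n, by omega⟩ m) := by
  have hn0 : (0 : ℕ) < n := by omega
  have e : ∀ k : ℕ, B ^ k = 1 + Matrix.single (⟨0, by omega⟩ : Fin (n + 1)) ⟨1, by omega⟩ (k : R)
          + Matrix.single (⟨n - 1, by omega⟩ : Fin (n + 1)) ⟨n, by omega⟩ (k : R) := by
    intro k
    induction k with
    | zero => simp
    | succ k ih =>
      rw [pow_succ, ih, hB]
      simp only [mul_add, add_mul, one_mul, mul_one]
      rw [Matrix.single_mul_single_of_ne, Matrix.single_mul_single_of_ne,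
        Matrix.single_mul_single_of_ne, Matrix.single_mul_single_of_ne, Nat.cast_succ,
        Matrix.single_add, Matrix.single_add]
      · abel
      all_goals (simp only [ne_eq, Fin.mk.injEq]; omega)
  have BpA : ∀ k : ℕ, ∀ i j : Fin (n + 1), (B ^ k) i j =
      if (i : ℕ) = j then 1 else
      if ((i : ℕ) = 0 ∧ (j : ℕ) = 1) ∨ ((i : ℕ) = n - 1 ∧ (j : ℕ) = n) then (k : R) else 0 := by
    intro k i j
    rw [e]
    simp only [Matrix.add_apply, Matrix.one_apply, Matrix.single_apply, Fin.ext_iff]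
    split_ifs <;> first | omega | simp
  have hBA := BpA 1
  simp only [pow_one, Nat.cast_one] at hBA
  have hAT : A ∈ Stmt8.T n R := by
    refine ⟨fun i j h => ?_, fun i => by simp [hA]⟩
    have h : (j : ℕ) < i := h
    rw [hA, if_neg (by omega), if_neg (by omega)]
  have hBT : B ∈ Stmt8.T n R := by
    refine ⟨fun i j h => ?_, fun i => by simp [hBA]⟩
    have h : (j : ℕ) < i := h
    rw [hBA, if_neg (by omega), if_neg (by omega)]
  have hφT : ∀ u, φ u ∈ Stmt8.T n R := by
    intro u
    induction u using FreeGroup.induction_on with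
    | C1 => rw [map_one]; exact one_mem _
    | of b => cases b
              · rw [hφx]; exact hAT
              · rw [hφy]; exact hBT
    | inv_of b hb => exact Stmt8.T_inv hb (by rw [← map_mul]; simp)
    | mul a b ha hb => rw [map_mul]; exact mul_mem ha hb
  let Φ : FreeGroup Bool →* Stmt8.T n R := φ.codRestrict _ hφT
  have hΦ : ∀ u, (Φ u).1 = φ u := fun u => rfl
  -- first congruence
  let D1 : Fin (n + 1) → Fin (n + 1) → Prop := fun i j =>
    (0 < (i : ℕ) ∧ (j : ℕ) < n) ∨ (j : ℕ) ≤ i + 1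
  have hD1 : ∀ i k j, i ≤ k → k ≤ j → D1 i j → D1 i k ∧ D1 k j := by
    intro i k j h1 h2 h
    have h1 : (i : ℕ) ≤ k := h1
    have h2 : (k : ℕ) ≤ j := h2
    simp only [D1] at h ⊢
    omega
  let C1 : Con (Stmt8.T n R) := Stmt8.con D1 hD1
  have hcomm : Commute ((C1.mk'.comp Φ) (FreeGroup.of false))
      ((C1.mk'.comp Φ) (FreeGroup.of true)) := by
    refine (Con.eq C1).mpr ?_
    intro i j hd
    change (φ _ * φ _) i j = (φ _ * φ _) i j
    rw [hφx, hφy]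
    have hd : (0 < (i : ℕ) ∧ (j : ℕ) < n) ∨ (j : ℕ) ≤ i + 1 := hd
    have hA1 : ∀ a b : Fin (n + 1), ((a : ℕ) = n ∨ (b : ℕ) ≤ a) → A a b = (1 : Matrix _ _ R) a b := by
      intro a b hab
      rw [hA, Matrix.one_apply]
      simp only [Fin.ext_iff]
      split_ifs with h1 h2
      · rfl
      · omega
      · rfl
    rw [hB]
    refine (Stmt8.B_comm A _ _ _ _ i j 1 ?_ ?_ ?_ ?_).symm <;> intro h <;>
      refine hA1 _ _ ?_ <;> have h := Fin.ext_iff.mp h <;> simp only at h ⊢ <;> omega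
  have hf1 := (Con.eq C1).mp (Stmt8.kill (C1.mk'.comp Φ) hcomm f hf)
  have hf1 : ∀ i j : Fin (n + 1), D1 i j → φ f i j = (1 : Matrix _ _ R) i j := hf1
  -- second congruence
  let D2 : Fin (n + 1) → Fin (n + 1) → Prop := fun i j => 0 < (i : ℕ) ∨ (j : ℕ) < n
  have hD2 : ∀ i k j, i ≤ k → k ≤ j → D2 i j → D2 i k ∧ D2 k j := by
    intro i k j h1 h2 h
    have h1 : (i : ℕ) ≤ k := h1
    have h2 : (k : ℕ) ≤ j := h2
    simp only [D2] at h ⊢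
    omega
  let C2 : Con (Stmt8.T n R) := Stmt8.con D2 hD2
  have key := Stmt8.hom_ext (C2.mk'.comp (Φ.comp σ))
    (C2.mk'.comp ((Stmt8.tau (c : R)).comp Φ)) ?_ w
  · have key2 : ∀ i j : Fin (n + 1), D2 i j → φ (σ w) i j =
        (c : R) ^ ((j : ℕ) - (i : ℕ)) * φ w i j := (Con.eq C2).mp key
    refine ⟨φ (σ w) ⟨0, by omega⟩ ⟨n, by omega⟩ - (c : R) ^ n * φ w ⟨0, by omega⟩ ⟨n, by omega⟩, ?_⟩
    ext i j
    rw [mul_add, mul_one, Matrix.add_apply, Matrix.of_apply]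
    by_cases hd : D2 i j
    · rw [key2 i j hd]
      by_cases hj : j = ⟨n, by omega⟩
      · subst hj
        rw [Matrix.mul_single_apply_same, Matrix.of_apply, (hφT w).1 i ⟨0, by omega⟩, mul_zero,
          zero_mul, add_zero]
        simp only [D2] at hd
        change 0 < (i : ℕ)
        omega
      · rw [Matrix.mul_single_apply_of_ne _ _ _ _ _ hj, add_zero]
    · simp only [D2] at hd
      have hi : i = ⟨0, Nat.succ_pos n⟩ := Fin.ext (by simp only; omega)
      have hj : j = ⟨n, Nat.lt_succ_self n⟩ := Fin.ext (by simp only; omega)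
      rw [hi, hj]
      rw [Matrix.mul_single_apply_same, Matrix.of_apply, (hφT w).2 ⟨0, Nat.succ_pos n⟩]
      simp only [Nat.sub_zero, Nat.sub_self, pow_zero, one_mul]
      ring
  · have hBf : (C2.mk' (Φ (FreeGroup.of true ^ c))) * C2.mk' (Φ f) =
        C2.mk' (Φ f) * (C2.mk' (Φ (FreeGroup.of true ^ c))) := by
      refine (Con.eq C2).mpr ?_
      intro i j hd
      change (φ _ * φ _) i j = (φ _ * φ _) i j
      have hd : 0 < (i : ℕ) ∨ (j : ℕ) < n := hd
      rw [map_pow, hφy, e]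
      refine Stmt8.B_comm (φ f) _ _ _ _ i j (c : R) ?_ ?_ ?_ ?_ <;> intro h <;>
        refine hf1 _ _ ?_ <;> have h := Fin.ext_iff.mp h <;> simp only [D1] at h ⊢ <;> omega
    intro b
    cases b
    · refine (Con.eq C2).mpr ?_
      intro i j hd
      change φ (σ _) i j = (c : R) ^ ((j : ℕ) - (i : ℕ)) * φ _ i j
      rw [hσx, map_pow, hφx]
      exact Stmt8.A_pow hunit A hA c i j
    · have e1 : (C2.mk'.comp (Φ.comp σ)) (FreeGroup.of true) =
          C2.mk' (Φ (FreeGroup.of true ^ c)) := by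
        simp only [MonoidHom.comp_apply, hσy]
        rw [map_mul, map_mul, map_mul, map_mul, mul_assoc, hBf, ← mul_assoc, ← map_mul, ← map_mul,
          ← map_mul Φ, ← map_mul Φ, inv_mul_cancel, one_mul]
      rw [e1]
      refine (Con.eq C2).mpr ?_
      intro i j hd
      change φ _ i j = (c : R) ^ ((j : ℕ) - (i : ℕ)) * φ _ i j
      rw [map_pow, hφy, BpA, hBA]
      split_ifs with h1 h2
      · simp [h1]
      · have : (j : ℕ) - i = 1 := by omega
        simp [this]
      · simp
end

section
/- For all M, N ∈ U and all indices 1 ≤ i < j ≤ n+1, the (i,j) entry of the product satisfies (M·N)_{i,j} = M_{i,j} + N_{i,j} + Σ_{r=i+1}^{j−1} M_{i,r}·N_{r,j}. Equivalently, the 1-cochains a_{i,j} : U → R, a_{i,j}(M) = M_{i,j}, on the group U with trivial coefficients satisfy D(a_{i,j}) = − Σ_{r=i+1}^{j−1} a_{i,r} ∪ a_{r,j}, where D(f)(g,h) = f(h) − f(g·h) + f(g) and (f ∪ f′)(g,h) = f(g)·f′(h); hence the cochains −a_{i,j} for i < j, (i,j) ≠ (1,n+1), form a defining system for the order-n Massey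 product ⟨−a_{1,2}, −a_{2,3}, …, −a_{n,n+1}⟩. -/
/- STATEMENT 11: for `M, N ∈ U` and `i < j`, the `(i,j)` entry of the product is
`(M·N)_{i,j} = M_{i,j} + N_{i,j} + ∑_{i < r < j} M_{i,r}·N_{r,j}`.  Equivalently, the
cochains `a_{i,j}(M) = M_{i,j}` satisfy the coboundary identity
`D(a_{i,j})(M,N) = a_{i,j}(N) − a_{i,j}(M·N) + a_{i,j}(M) = − ∑_{i<r<j} a_{i,r}(M)·a_{r,j}(N)`,
so the `−a_{i,j}`, `i < j`, `(i,j) ≠ (1,n+1)`, form a defining system for the order-`n`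
Massey product `⟨−a_{1,2}, …, −a_{n,n+1}⟩`. -/
theorem stmt_11 {n : ℕ} (hn : 3 ≤ n) {R : Type*} [CommRing R]
    (M N : Matrix (Fin (n + 1)) (Fin (n + 1)) R) (hM : MemU M) (hN : MemU N) :
    ∀ i j : Fin (n + 1), i < j →
      ((M * N) i j = M i j + N i j + ∑ r ∈ Finset.Ioo i j, M i r * N r j) ∧
      (N i j - (M * N) i j + M i j = - ∑ r ∈ Finset.Ioo i j, M i r * N r j) := by
  intro i j hij
  have key : (M * N) i j = M i j + N i j + ∑ r ∈ Finset.Ioo i j, M i r * N r j := by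
    have h1 : (M * N) i j = ∑ r ∈ Finset.Icc i j, M i r * N r j := by
      rw [Matrix.mul_apply]
      symm
      apply Finset.sum_subset (Finset.subset_univ _)
      intro r _ hr
      rw [Finset.mem_Icc, not_and_or, not_le, not_le] at hr
      rcases hr with hr | hr
      · rw [hM.1 i r hr, zero_mul]
      · rw [hN.1 r j hr, mul_zero]
    rw [h1, ← Finset.Ioc_insert_left hij.le, Finset.sum_insert (by simp),
      ← Finset.Ioo_insert_right hij, Finset.sum_insert (by simp), hM.2 i, hN.2 j]
    ring
  refine ⟨key, ?_⟩
  rw [key]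
  ring
end

section
/- Let G be a group generated by two elements x and y. Then the commutator subgroup of G equals the normal closure in G of the single element ⁅x,y⁆ = x y x⁻¹ y⁻¹. -/
open scoped commutatorElement

/- STATEMENT 13: if a group `G` is generated by two elements `x` and `y`, then the
commutator subgroup of `G` equals the normal closure of the single commutator `⁅x, y⁆`. -/
theorem stmt_13 {G : Type*} [Group G] (x y : G)
    (h : Subgroup.closure ({x, y} : Set G) = ⊤) :
    commutator G = Subgroup.normalClosure ({⁅x, y⁆} : Set G) := by
  apply le_antisymm
  · set N := Subgroup.normalClosure ({⁅x, y⁆} : Set G) with hN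
    let f := QuotientGroup.mk' N
    have hxy : Commute (f x) (f y) := by
      rw [← commutatorElement_eq_one_iff_commute, ← map_commutatorElement]
      exact (QuotientGroup.eq_one_iff _).2 (Subgroup.subset_normalClosure rfl)
    -- an element commuting with the images of both generators is central
    have key : ∀ c : G ⧸ N, Commute c (f x) → Commute c (f y) → ∀ g : G, Commute c (f g) := by
      intro c hx hy g
      have hg : g ∈ Subgroup.closure ({x, y} : Set G) := h ▸ Subgroup.mem_top g
      induction hg using Subgroup.closure_induction with
      | mem z hz =>
        rcases hz with rfl | rfl
        · exact hx
        · exact hy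
      | one => rw [map_one]; exact Commute.one_right c
      | mul a b _ _ ha hb => rw [map_mul]; exact ha.mul_right hb
      | inv a _ ha => rw [map_inv]; exact ha.inv_right
    rw [commutator_def, Subgroup.commutator_le]
    intro a _ b _
    have hab : Commute (f a) (f b) :=
      key _ (key _ (Commute.refl _) hxy a).symm (key _ hxy.symm (Commute.refl _) a).symm b
    rw [← commutatorElement_eq_one_iff_commute, ← map_commutatorElement] at hab
    exact (QuotientGroup.eq_one_iff _).1 hab
  · apply Subgroup.normalClosure_le_normal
    rintro _ rfl
    exact Subgroup.commutator_mem_commutator (Subgroup.mem_top x) (Subgroup.mem_top y)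
end

section
/- Let K be a separably closed field and let E be a finite Galois extension of the field K((z)) of formal Laurent series over K, of degree m, where m is invertible in K (i.e., the characteristic of K does not divide m). Then there is a ring isomorphism from E onto the Laurent series field K((t)) whose restriction to K((z)) is the K-algebra embedding K((z)) → K((t)) that acts as the identity on coefficients and sends z to t^m. In particular, every finite Galois extension of K((z)) of degree prime to the characteristic embeds into the field of Puiseux series ∪_{m≥1} K((z^{1/m})). -/
open scoped LaurentSeries PowerSeries

theorem aux_norm {A F E : Type*} [CommRing A] [IsDomain A] [IsIntegrallyClosed A]
    [NontriviallyNormedField F] [IsUltrametricDist F] [CompleteSpace F]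
    [Field E] [Algebra A F] [IsFractionRing A F] [Algebra F E] [Algebra A E] [IsScalarTower A F E]
    [Algebra.IsAlgebraic F E]
    (hA : ∀ x : F, ‖x‖ ≤ 1 ↔ ∃ a : A, algebraMap A F a = x) :
    ∃ N : E → ℝ, N 1 = 1 ∧ N 0 = 0 ∧ (∀ x y, N (x * y) = N x * N y) ∧ (∀ x, 0 ≤ N x) ∧
      (∀ x y, N (x + y) ≤ max (N x) (N y)) ∧ ∀ x, N x ≤ 1 ↔ IsIntegral A x := by
  refine ⟨spectralNorm F E, spectralNorm_one, spectralNorm_zero, fun x y => ?_, fun x => spectralNorm_nonneg x,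
    fun x y => ?_, fun x => ?_⟩
  · exact spectralAlgNorm_mul x y
  · exact isNonarchimedean_spectralNorm x y
  · have hx : IsIntegral F x := Algebra.IsIntegral.isIntegral x
    rw [spectralNorm, spectralValue_le_one_iff (minpoly.monic hx)]
    constructor
    · intro h
      have : minpoly F x ∈ Polynomial.lifts (algebraMap A F) := by
        rw [Polynomial.lifts_iff_coeff_lifts]
        intro n
        obtain ⟨a, ha⟩ := (hA _).1 (h n)
        exact ⟨a, ha⟩
      obtain ⟨q, hq, -, hqm⟩ := Polynomial.lifts_and_natDegree_eq_and_monic this (minpoly.monic hx)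
      refine ⟨q, hqm, ?_⟩
      rw [IsScalarTower.algebraMap_eq A F E, ← Polynomial.eval₂_map, hq]
      exact minpoly.aeval F x
    · intro h n
      rw [hA, minpoly.isIntegrallyClosed_eq_field_fractions' F h]
      exact ⟨_, (Polynomial.coeff_map _ _).symm⟩

theorem aux_local_of_norm {A E : Type*} [CommRing A] [Field E] [Algebra A E] (N : E → ℝ)
    (h1 : N 1 = 1) (hN0 : N 0 = 0) (hmul : ∀ x y, N (x * y) = N x * N y) (h0 : ∀ x, 0 ≤ N x)
    (hadd : ∀ x y, N (x + y) ≤ max (N x) (N y)) (hN : ∀ x, N x ≤ 1 ↔ IsIntegral A x) :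
    IsLocalRing (integralClosure A E) := by
  have key : ∀ x : integralClosure A E, IsUnit x ↔ ¬ N x < 1 := by
    intro x
    constructor
    · rintro hx hlt
      obtain ⟨y, hy⟩ := hx.exists_right_inv
      have h2 : N x * N y = 1 := by
        rw [← hmul, ← h1]; congr 1; exact congrArg Subtype.val hy
      have h3 := (hN y).2 y.2
      nlinarith [h0 x, h0 y]
    · intro h
      have hx0 : (x : E) ≠ 0 := by
        intro h'
        apply h
        simp [h', hN0]
      have h2 : N x * N (x : E)⁻¹ = 1 := by rw [← hmul, mul_inv_cancel₀ hx0, h1]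
      have h3 : N (x : E)⁻¹ ≤ 1 := by nlinarith [h0 x, h0 (x : E)⁻¹]
      refine IsUnit.of_mul_eq_one ⟨(x : E)⁻¹, (hN _).1 h3⟩ ?_
      ext
      exact mul_inv_cancel₀ hx0
  have : Nontrivial (integralClosure A E) := inferInstance
  refine IsLocalRing.of_nonunits_add fun a b ha hb => ?_
  rw [mem_nonunits_iff, key, not_not] at *
  exact (hadd _ _).trans_lt (max_lt ha hb)

theorem aux_laurent (K : Type*) [Field K] (E : Type*) [Field E] [Algebra K⸨X⸩ E]
    [Algebra.IsAlgebraic K⸨X⸩ E] [Algebra K⟦X⟧ E] [IsScalarTower K⟦X⟧ K⸨X⸩ E] :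
    ∃ N : E → ℝ, N 1 = 1 ∧ N 0 = 0 ∧ (∀ x y, N (x * y) = N x * N y) ∧ (∀ x, 0 ≤ N x) ∧
      (∀ x y, N (x + y) ≤ max (N x) (N y)) ∧ ∀ x, N x ≤ 1 ↔ IsIntegral K⟦X⟧ x := by
  let : (Valued.v : Valuation K⸨X⸩ (WithZero (Multiplicative ℤ))).RankLeOne :=
    { hom' := (WithZeroMulInt.toNNReal (e := 2) (by norm_num)).comp
        MonoidWithZeroHom.ValueGroup₀.embedding
      strictMono' := (WithZeroMulInt.toNNReal_strictMono (by norm_num)).comp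
        MonoidWithZeroHom.ValueGroup₀.embedding_strictMono }
  have : (Valued.v : Valuation K⸨X⸩ (WithZero (Multiplicative ℤ))).IsNontrivial :=
    ⟨HahnSeries.single 1 1, by
      rw [LaurentSeries.valuation_single_zpow]
      simp [WithZero.exp_eq_one]⟩
  let : (Valued.v : Valuation K⸨X⸩ (WithZero (Multiplicative ℤ))).RankOne := {}
  let : NontriviallyNormedField K⸨X⸩ :=
    Valued.toNontriviallyNormedField (L := K⸨X⸩) (Γ₀ := (WithZero (Multiplicative ℤ)))
  have : IsUltrametricDist K⸨X⸩ := Valued.instIsUltrametricDist _ _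
  refine aux_norm (A := K⟦X⟧) (F := K⸨X⸩) (E := E) fun x => ?_
  refine Iff.trans Valued.toNormedField.norm_le_one_iff ?_
  rw [LaurentSeries.val_le_one_iff_eq_coe]
  rfl

theorem aux_local (K : Type*) [Field K] (E : Type*) [Field E] [Algebra K⸨X⸩ E]
    [Algebra.IsAlgebraic K⸨X⸩ E] [Algebra K⟦X⟧ E] [IsScalarTower K⟦X⟧ K⸨X⸩ E] :
    IsLocalRing (integralClosure K⟦X⟧ E) := by
  obtain ⟨N, h1, h2, h3, h4, h5, h6⟩ := aux_laurent K E
  exact aux_local_of_norm N h1 h2 h3 h4 h5 h6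

theorem aux_core {K B G : Type*} [Field K] [CommRing B] [IsDomain B] [IsDiscreteValuationRing B]
    [Group G] [Finite G] [MulSemiringAction G B] [FaithfulSMul G B] (ι : K →+* B)
    (hι : ∀ (g : G) (a : K), g • ι a = ι a)
    (hres : ∀ b : B, ∃ a : K, IsLocalRing.residue B b = IsLocalRing.residue B (ι a))
    (hG : (Nat.card G : K) ≠ 0) :
    ∃ π : B, Irreducible π ∧ ∃ c : G →* K, Function.Injective c ∧
      (∀ g, g • π = ι (c g) * π) ∧
      ∀ (g : G) (b : B), IsLocalRing.residue B (g • b) = IsLocalRing.residue B b := by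
  classical
  have := Fintype.ofFinite G
  set r := IsLocalRing.residue B with hr
  have hr0 : ∀ b : B, r b ≠ 0 ↔ IsUnit b := fun b => IsLocalRing.residue_ne_zero_iff_isUnit b
  have hunit : ∀ (g : G) (b : B), IsUnit (g • b) ↔ IsUnit b := fun g b => by
    refine ⟨fun h => ?_, fun h => h.map (MulSemiringAction.toRingHom G B g)⟩
    simpa using h.map (MulSemiringAction.toRingHom G B g⁻¹)
  have hirr : ∀ (g : G) (b : B), Irreducible b → Irreducible (g • b) := fun g b h =>
    (MulEquiv.irreducible_iff (MulSemiringAction.toRingEquiv G B g)).2 h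
  have hrg : ∀ (g : G) (b : B), r (g • b) = r b := by
    intro g b
    obtain ⟨a, ha⟩ := hres b
    have h1 : r (b - ι a) = 0 := by rw [map_sub, ha, sub_self]
    have h2 : r (g • (b - ι a)) = 0 := by
      by_contra h
      rw [← ne_eq, hr0, hunit, ← hr0] at h
      exact h h1
    rw [smul_sub, hι, map_sub, ← ha, sub_eq_zero] at h2
    exact h2
  let ρ : K ≃+* IsLocalRing.ResidueField B := RingEquiv.ofBijective (r.comp ι)
    ⟨(r.comp ι).injective, fun x => by
      obtain ⟨b, rfl⟩ := IsLocalRing.residue_surjective x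
      obtain ⟨a, ha⟩ := hres b
      exact ⟨a, ha.symm⟩⟩
  have hρ : ∀ a, r (ι a) = ρ a := fun a => rfl
  obtain ⟨π₀, hπ₀⟩ := IsDiscreteValuationRing.exists_irreducible B
  have hass : ∀ g : G, ∃ u : Bˣ, π₀ * u = g • π₀ := fun g =>
    IsDiscreteValuationRing.associated_of_irreducible B hπ₀ (hirr g _ hπ₀)
  choose u hu using hass
  have hu1 : ∀ g h, (u (g * h) : B) = u g * g • (u h : B) := by
    intro g h
    apply mul_left_cancel₀ hπ₀.ne_zero
    rw [hu, mul_smul, ← hu h, smul_mul', ← hu g, mul_assoc]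
  let c : G →* K :=
    { toFun := fun g => ρ.symm (r (u g))
      map_one' := by
        have h := hu 1
        rw [one_smul] at h
        have : (u 1 : B) = 1 := mul_left_cancel₀ hπ₀.ne_zero (h.trans (mul_one _).symm)
        rw [this, map_one, map_one]
      map_mul' := fun g h => by
        rw [hu1, map_mul, map_mul, hrg] }
  have hc : ∀ g, r (u g) = ρ (c g) := fun g => (ρ.apply_symm_apply _).symm
  have hc0 : ∀ g, c g ≠ 0 := fun g h => by
    have := hc g
    rw [h, map_zero] at this
    exact (hr0 _).2 (u g).isUnit this
  have hcardk : ∀ n : ℕ, n ∣ Nat.card G → (n : IsLocalRing.ResidueField B) ≠ 0 := by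
    rintro n ⟨k, hk⟩ h
    apply hG
    apply ρ.injective
    rw [hk, Nat.cast_mul, map_mul, map_natCast, h, zero_mul, map_zero]
  set π := ∑ g : G, ι (c g)⁻¹ * g • π₀ with hπ
  have hπu : π = π₀ * ∑ g : G, ι (c g)⁻¹ * u g := by
    rw [hπ, Finset.mul_sum]
    refine Finset.sum_congr rfl fun g _ => ?_
    rw [← hu]; ring
  have hun : IsUnit (∑ g : G, ι (c g)⁻¹ * (u g : B)) := by
    rw [← hr0, map_sum, Finset.sum_congr rfl (g := fun _ => 1)]
    · simpa using hcardk _ dvd_rfl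
    · intro g _
      rw [map_mul, hρ, hc, ← map_mul, inv_mul_cancel₀ (hc0 g), map_one]
  have hπi : Irreducible π := by
    rw [hπu]
    exact (irreducible_mul_isUnit hun).2 hπ₀
  have hgπ : ∀ g, g • π = ι (c g) * π := by
    intro h
    rw [hπ, Finset.smul_sum, Finset.mul_sum]
    refine Fintype.sum_equiv (Equiv.mulLeft h) _ _ fun g => ?_
    rw [smul_mul', hι, Equiv.coe_mulLeft, ← mul_assoc, ← map_mul, map_mul c, mul_inv,
      mul_inv_cancel_left₀ (hc0 h), mul_smul]
  refine ⟨π, hπi, c, ?_, hgπ, hrg⟩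
  rw [injective_iff_map_eq_one]
  intro g hg
  have hgπ1 : g • π = π := by rw [hgπ, hg, map_one, one_mul]
  apply FaithfulSMul.eq_of_smul_eq_smul (α := B)
  intro b
  rw [one_smul, ← sub_eq_zero]
  by_contra hy
  obtain ⟨k, v, hv⟩ := IsDiscreteValuationRing.eq_unit_mul_pow_irreducible hy hπi
  have hpow : ∀ i : ℕ, g ^ i • π = π := by
    intro i
    induction i with
    | zero => simp
    | succ i ih => rw [pow_succ, mul_smul, hgπ1, ih]
  have hs : ∑ i ∈ Finset.range (orderOf g), g ^ i • (g • b - b) = 0 := by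
    have : ∀ i, g ^ i • (g • b - b) = g ^ (i+1) • b - g ^ i • b := fun i => by
      rw [smul_sub, ← mul_smul, ← pow_succ]
    simp only [this]
    rw [Finset.sum_range_sub (fun i => g ^ i • b)]
    simp [pow_orderOf_eq_one]
  rw [hv] at hs
  simp only [smul_mul', smul_pow', hpow] at hs
  rw [← Finset.sum_mul, mul_eq_zero] at hs
  rcases hs with hs | hs
  · have := congrArg r hs
    rw [map_sum] at this
    simp only [hrg] at this
    rw [Finset.sum_const, Finset.card_range, map_zero, nsmul_eq_mul, mul_eq_zero] at this
    rcases this with h | h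
    · exact hcardk _ (orderOf_dvd_natCard g) h
    · exact (hr0 _).2 v.isUnit h
  · exact pow_ne_zero k hπi.ne_zero hs

theorem aux_adic (K : Type*) [Field K] :
    IsAdicComplete (Ideal.span {(PowerSeries.X : K⟦X⟧)}) K⟦X⟧ where
  haus' := by
    intro x hx
    ext n
    have h := hx (n + 1)
    rw [smul_eq_mul, Ideal.mul_top, SModEq.zero, Ideal.span_singleton_pow,
      Ideal.mem_span_singleton, PowerSeries.X_pow_dvd_iff] at h
    simpa using h n (Nat.lt_succ_self n)
  prec' := by
    intro f hf
    have hf' : ∀ {a b}, a ≤ b → ∀ i < a, (f a).coeff i = (f b).coeff i := by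
      intro a b hab i hi
      have h := hf hab
      rw [smul_eq_mul, Ideal.mul_top, SModEq.sub_mem, Ideal.span_singleton_pow,
        Ideal.mem_span_singleton, PowerSeries.X_pow_dvd_iff] at h
      have := h i hi
      rwa [map_sub, sub_eq_zero] at this
    refine ⟨PowerSeries.mk fun n => (f (n + 1)).coeff n, fun n => ?_⟩
    rw [smul_eq_mul, Ideal.mul_top, SModEq.sub_mem, Ideal.span_singleton_pow,
        Ideal.mem_span_singleton, PowerSeries.X_pow_dvd_iff]
    intro i hi
    rw [map_sub, PowerSeries.coeff_mk, sub_eq_zero]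
    exact (hf' (Nat.succ_le_of_lt hi) i (Nat.lt_succ_self i)).symm

theorem aux_root (K : Type*) [Field K] [IsSepClosed K] (m : ℕ) (hm : (m : K) ≠ 0)
    (u : K⟦X⟧) (hu : IsUnit u) : ∃ s : K⟦X⟧, s ^ m = u := by
  have := aux_adic K
  have hm0 : m ≠ 0 := by rintro rfl; simp at hm
  have hu0 : PowerSeries.constantCoeff u ≠ 0 := by
    rw [PowerSeries.isUnit_iff_constantCoeff] at hu
    exact hu.ne_zero
  have : NeZero (m : K) := ⟨hm⟩
  obtain ⟨a, ha⟩ := IsSepClosed.exists_pow_nat_eq (k := K) (PowerSeries.constantCoeff u) m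
  have ha0 : a ≠ 0 := by
    rintro rfl
    rw [zero_pow hm0] at ha
    exact hu0 ha.symm
  obtain ⟨s, hs, -⟩ := HenselianRing.is_henselian (R := K⟦X⟧)
    (I := Ideal.span {(PowerSeries.X : K⟦X⟧)}) (Polynomial.X ^ m - Polynomial.C u)
    (Polynomial.monic_X_pow_sub_C u hm0) (PowerSeries.C a) (by
      rw [Ideal.mem_span_singleton, PowerSeries.X_dvd_iff]
      simp [ha]) (by
      apply IsUnit.map
      rw [PowerSeries.isUnit_iff_constantCoeff]
      simp [Polynomial.derivative_X_pow, hm, ha0])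
  refine ⟨s, ?_⟩
  simpa [Polynomial.IsRoot, sub_eq_zero] using hs

theorem aux_iso {F E T : Type*} [Field F] [Field E] [Field T] [Algebra F E]
    [FiniteDimensional F E] (φ : F →+* T) (m : ℕ) (hm : 0 < m) (hdeg : Module.finrank F E = m)
    (z : F) (p : E) (hp : p ^ m = algebraMap F E z) (htop : IntermediateField.adjoin F {p} = ⊤)
    (t : T) (ht : t ^ m = φ z)
    (hT : ∀ y : T, ∃ g : ℕ → F, y = ∑ i ∈ Finset.range m, φ (g i) * t ^ i) :
    ∃ e : E ≃+* T, ∀ f, e (algebraMap F E f) = φ f := by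
  let : Algebra F T := φ.toAlgebra
  have hint : IsIntegral F p := Algebra.IsIntegral.isIntegral p
  have htop' : Algebra.adjoin F {p} = ⊤ := by
    rw [← IntermediateField.adjoin_simple_toSubalgebra_of_isAlgebraic hint.isAlgebraic, htop]
    rfl
  have hmin : minpoly F p = Polynomial.X ^ m - Polynomial.C z := by
    symm
    refine Polynomial.eq_of_monic_of_dvd_of_natDegree_le (minpoly.monic hint)
      (Polynomial.monic_X_pow_sub_C z hm.ne') (minpoly.dvd F p (by simp [hp])) ?_
    rw [Polynomial.natDegree_X_pow_sub_C, ← IntermediateField.adjoin.finrank hint, htop,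
      IntermediateField.finrank_top', hdeg]
  let pb := PowerBasis.ofAdjoinEqTop hint htop'
  have hgen : pb.gen = p := PowerBasis.ofAdjoinEqTop_gen hint htop'
  let ψ : E →ₐ[F] T := pb.lift t (by
    rw [hgen, hmin]
    simp [ht, RingHom.algebraMap_toAlgebra])
  have hψ : ψ p = t := by
    conv_lhs => rw [← hgen]
    exact pb.lift_gen _ _
  refine ⟨RingEquiv.ofBijective ψ.toRingHom ⟨ψ.toRingHom.injective, fun y => ?_⟩, fun f => ?_⟩
  · obtain ⟨g, rfl⟩ := hT y
    refine ⟨∑ i ∈ Finset.range m, algebraMap F E (g i) * p ^ i, ?_⟩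
    change ψ _ = _
    simp only [map_sum, map_mul, map_pow, hψ, AlgHom.commutes]
    rfl
  · exact ψ.commutes f

theorem aux_emb (K : Type*) [Field K] (m : ℕ) (hm : 0 < m) :
    ∃ φ : K⸨X⸩ →+* K⸨X⸩, (∀ f k, (φ f).coeff ((m : ℤ) * k) = f.coeff k) ∧
      (∀ f (j : ℤ), ¬ ((m : ℤ) ∣ j) → (φ f).coeff j = 0) ∧
      (HahnSeries.single 1 1 : K⸨X⸩) ^ m = φ (HahnSeries.single 1 1) ∧
      ∀ y : K⸨X⸩, ∃ g : ℕ → K⸨X⸩,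
        y = ∑ i ∈ Finset.range m, φ (g i) * (HahnSeries.single 1 1 : K⸨X⸩) ^ i := by
  have hm' : (0 : ℤ) < m := by exact_mod_cast hm
  have hinj : Function.Injective (AddMonoidHom.mulLeft (m : ℤ)) := fun a b h =>
    mul_left_cancel₀ hm'.ne' h
  have hle : ∀ a b : ℤ, AddMonoidHom.mulLeft (m : ℤ) a ≤ AddMonoidHom.mulLeft (m : ℤ) b ↔ a ≤ b :=
    fun a b => mul_le_mul_iff_right₀ hm'
  let φ : K⸨X⸩ →+* K⸨X⸩ := HahnSeries.embDomainRingHom (AddMonoidHom.mulLeft (m : ℤ)) hinj hle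
  have h1 : ∀ f k, (φ f).coeff ((m : ℤ) * k) = f.coeff k := fun f k =>
    HahnSeries.embDomain_coeff (f := ⟨⟨AddMonoidHom.mulLeft (m : ℤ), hinj⟩, hle _ _⟩)
  have h2 : ∀ f (j : ℤ), ¬ ((m : ℤ) ∣ j) → (φ f).coeff j = 0 := fun f j hj =>
    HahnSeries.embDomain_of_notMem_range (f := ⟨⟨AddMonoidHom.mulLeft (m : ℤ), hinj⟩, hle _ _⟩)
      (by
        rintro ⟨k, hk⟩
        exact hj ⟨k, hk.symm⟩)
  refine ⟨φ, h1, h2, ?_, fun y => ?_⟩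
  · ext j
    rw [HahnSeries.single_pow]
    by_cases hj : (m : ℤ) ∣ j
    · obtain ⟨k, rfl⟩ := hj
      rw [h1]
      by_cases hk : k = 1
      · subst hk; simp
      · rw [HahnSeries.coeff_single_of_ne hk, HahnSeries.coeff_single_of_ne]
        intro h
        apply hk
        apply mul_left_cancel₀ hm'.ne'
        simpa using h
    · rw [h2 _ _ hj, HahnSeries.coeff_single_of_ne]
      rintro rfl
      simp at hj
  · have hg : ∀ i : ℕ, ∃ g : K⸨X⸩, ∀ k, g.coeff k = y.coeff (m * k + i) := by
      intro i
      obtain ⟨N, hN⟩ : ∃ N : ℤ, ∀ j < N, y.coeff j = 0 :=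
        ⟨y.order, fun j hj => HahnSeries.coeff_eq_zero_of_lt_order hj⟩
      refine ⟨HahnSeries.ofSuppBddBelow (fun k => y.coeff (m * k + i)) ?_, fun k => rfl⟩
      refine ⟨-|N| - i, fun k hk => ?_⟩
      by_contra! hlt
      apply hk
      apply hN
      have := neg_abs_le N
      have := abs_nonneg N
      nlinarith
    choose g hg using hg
    refine ⟨g, ?_⟩
    ext j
    have hterm : ∀ i, (φ (g i) * (HahnSeries.single 1 1 : K⸨X⸩) ^ i).coeff j =
        (φ (g i)).coeff (j - i) := by
      intro i
      have := HahnSeries.coeff_mul_single_add (x := φ (g i)) (r := (1:K)) (a := j - i) (b := (i:ℤ))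
      simpa [HahnSeries.single_pow] using this
    rw [HahnSeries.coeff_sum]
    simp only [hterm]
    have hmod : (0 : ℤ) ≤ j % m := Int.emod_nonneg _ hm'.ne'
    have hmod2 : j % m < m := Int.emod_lt_of_pos _ hm'
    rw [Finset.sum_eq_single (j % m).toNat]
    · have e1 : j - ((j % m).toNat : ℤ) = m * (j / m) := by
        rw [Int.toNat_of_nonneg hmod]; have := Int.emod_add_mul_ediv j m; linarith
      rw [e1, h1, hg, ← e1]; simp
    · intro i hi hne
      apply h2
      intro hd
      apply hne
      rw [Finset.mem_range] at hi
      have h3 : j % m = i % m := Int.emod_emod_of_dvd j (dvd_refl (m : ℤ)) ▸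
        (Int.emod_emod_of_dvd j (dvd_refl (m : ℤ))).symm ▸ Int.ModEq.symm ((Int.modEq_iff_dvd).2 hd)
      rw [Int.emod_eq_of_lt (a := (i : ℤ)) (by omega) (by omega)] at h3
      omega
    · intro h
      exfalso
      apply h
      rw [Finset.mem_range]
      omega

theorem aux_res {K B G : Type*} [Field K] [IsSepClosed K] [CommRing B] [IsDomain B] [IsLocalRing B]
    [Group G] [Finite G] [MulSemiringAction G B] [Algebra K⟦X⟧ B] [Algebra.IsIntegral K⟦X⟧ B]
    (hinj : Function.Injective (algebraMap K⟦X⟧ B))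
    (hA : ∀ (g : G) (a : K⟦X⟧), g • algebraMap K⟦X⟧ B a = algebraMap K⟦X⟧ B a)
    (hfix : ∀ b : B, (∀ g : G, g • b = b) → ∃ a, algebraMap K⟦X⟧ B a = b)
    (hG : (Nat.card G : K) ≠ 0) (b : B) :
    ∃ a : K, IsLocalRing.residue B b =
      IsLocalRing.residue B (algebraMap K⟦X⟧ B (PowerSeries.C a)) := by
  classical
  have := Fintype.ofFinite G
  set r := IsLocalRing.residue B with hr
  have hr0 : ∀ b : B, r b ≠ 0 ↔ IsUnit b := fun b => IsLocalRing.residue_ne_zero_iff_isUnit b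
  have hunit : ∀ (g : G) (b : B), IsUnit (g • b) ↔ IsUnit b := fun g b => by
    refine ⟨fun h => ?_, fun h => h.map (MulSemiringAction.toRingHom G B g)⟩
    simpa using h.map (MulSemiringAction.toRingHom G B g⁻¹)
  have hX : r (algebraMap K⟦X⟧ B PowerSeries.X) = 0 := by
    by_contra h
    rw [← ne_eq, hr0] at h
    have hl : IsLocalHom (algebraMap K⟦X⟧ B) :=
      (algebraMap_isIntegral_iff.2 inferInstance).isLocalHom hinj
    have := h.of_map
    rw [PowerSeries.isUnit_iff_constantCoeff] at this
    simp at this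
  let ρ : K →+* IsLocalRing.ResidueField B := (r.comp (algebraMap K⟦X⟧ B)).comp PowerSeries.C
  have hρ : ∀ a : K⟦X⟧, r (algebraMap K⟦X⟧ B a) = ρ (PowerSeries.constantCoeff a) := by
    intro a
    obtain ⟨q, hq⟩ : (PowerSeries.X : K⟦X⟧) ∣ a - PowerSeries.C (PowerSeries.constantCoeff a) := by
      rw [PowerSeries.X_dvd_iff]; simp
    rw [sub_eq_iff_eq_add] at hq
    conv_lhs => rw [hq]
    rw [map_add, map_add, map_mul, map_mul, hX, zero_mul, zero_add]
    rfl
  let : Algebra K (IsLocalRing.ResidueField B) := ρ.toAlgebra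
  have halg : Algebra.IsAlgebraic K (IsLocalRing.ResidueField B) := by
    refine ⟨fun x => ?_⟩
    obtain ⟨b, rfl⟩ := IsLocalRing.residue_surjective x
    obtain ⟨p, hp, hpb⟩ := Algebra.IsIntegral.isIntegral (R := K⟦X⟧) b
    apply IsIntegral.isAlgebraic
    refine ⟨p.map PowerSeries.constantCoeff, hp.map _, ?_⟩
    rw [Polynomial.eval₂_map]
    have : (algebraMap K (IsLocalRing.ResidueField B)).comp PowerSeries.constantCoeff =
        r.comp (algebraMap K⟦X⟧ B) := by
      ext a
      exact (hρ a).symm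
    rw [this, ← Polynomial.hom_eval₂, hpb, map_zero]
  have hpi : IsPurelyInseparable K (IsLocalRing.ResidueField B) := inferInstance
  obtain ⟨q, hq⟩ := ExpChar.exists K
  have hq' : ExpChar (IsLocalRing.ResidueField B) q := expChar_of_injective_ringHom ρ.injective q
  have hrg : ∀ g : G, r (g • b) = r b := by
    intro g
    obtain ⟨n, a, ha⟩ := IsPurelyInseparable.pow_mem K q (r b)
    have h1 : r (b ^ q ^ n - algebraMap _ _ (PowerSeries.C a)) = 0 := by
      rw [map_sub, map_pow, ← ha, sub_eq_zero]; rfl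
    have h2 : r (g • (b ^ q ^ n - algebraMap _ _ (PowerSeries.C a))) = 0 := by
      by_contra h
      rw [← ne_eq, hr0, hunit, ← hr0] at h
      exact h h1
    rw [smul_sub, hA, map_sub, sub_eq_zero, smul_pow', map_pow] at h2
    rw [map_sub, sub_eq_zero, map_pow] at h1
    apply iterateFrobenius_inj (IsLocalRing.ResidueField B) q n
    rw [iterateFrobenius_def, iterateFrobenius_def, h1, h2]
  obtain ⟨a, ha⟩ := hfix (∑ g : G, g • b) (fun h => by
    rw [Finset.smul_sum]
    exact Fintype.sum_equiv (Equiv.mulLeft h) _ _ fun g => by simp [mul_smul])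
  have h3 := congrArg r ha
  rw [hρ, map_sum] at h3
  simp only [hrg] at h3
  rw [Finset.sum_const, Finset.card_univ, ← Nat.card_eq_fintype_card, nsmul_eq_mul] at h3
  refine ⟨PowerSeries.constantCoeff a / Nat.card G, ?_⟩
  change _ = ρ _
  have hk : (Nat.card G : IsLocalRing.ResidueField B) ≠ 0 := by
    intro h
    apply hG
    apply ρ.injective
    rw [map_natCast, h, map_zero]
  rw [map_div₀, h3, map_natCast, mul_div_cancel_left₀ _ hk]

theorem aux_final (K : Type*) [Field K] [IsSepClosed K]
    (E : Type*) [Field E] [Algebra K⸨X⸩ E] [Algebra K⟦X⟧ E] [IsScalarTower K⟦X⟧ K⸨X⸩ E]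
    [FiniteDimensional K⸨X⸩ E] [IsGalois K⸨X⸩ E]
    (m : ℕ) (hm : 0 < m) (hmu : (m : K) ≠ 0)
    (hdeg : Module.finrank K⸨X⸩ E = m) :
    ∃ p : E, p ^ m = algebraMap K⸨X⸩ E (HahnSeries.single 1 1) ∧
      IntermediateField.adjoin K⸨X⸩ {p} = ⊤ := by
  have hloc : IsLocalRing (integralClosure K⟦X⟧ E) := aux_local K E
  have hcard : Nat.card (E ≃ₐ[K⸨X⸩] E) = m := by rw [IsGalois.card_aut_eq_finrank, hdeg]
  have hcomm : SMulCommClass (E ≃ₐ[K⸨X⸩] E) K⟦X⟧ E := ⟨fun g a x => by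
    simp only [Algebra.smul_def, smul_mul', AlgEquiv.smul_def,
      IsScalarTower.algebraMap_apply K⟦X⟧ K⸨X⸩ E, AlgEquiv.commutes]⟩
  let B := integralClosure K⟦X⟧ E
  have hinjE : Function.Injective (algebraMap K⟦X⟧ E) := by
    rw [IsScalarTower.algebraMap_eq K⟦X⟧ K⸨X⸩ E]
    exact (algebraMap K⸨X⸩ E).injective.comp (IsFractionRing.injective K⟦X⟧ K⸨X⸩)
  have hinj : Function.Injective (algebraMap K⟦X⟧ B) := fun a b h =>
    hinjE (congrArg (algebraMap B E) h)
  have hint : Algebra.IsIntegral K⟦X⟧ B := inferInstance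
  have hded : IsDedekindDomain B := integralClosure.isDedekindDomain K⟦X⟧ K⸨X⸩ E
  have hnf : ¬ IsField B := fun h =>
    IsDiscreteValuationRing.not_isField K⟦X⟧ (isField_of_isIntegral_of_isField hinj h)
  have hdvr : IsDiscreteValuationRing B := by
    have := (IsDiscreteValuationRing.TFAE B hnf).out 0 2
    exact this.2 hded
  have hA : ∀ (g : E ≃ₐ[K⸨X⸩] E) (a : K⟦X⟧), g • algebraMap K⟦X⟧ B a = algebraMap K⟦X⟧ B a := by
    intro g a
    exact smul_algebraMap g a
  have hsm : ∀ (g : E ≃ₐ[K⸨X⸩] E) (b : B), ((g • b : B) : E) = g (b : E) := fun g b => rfl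
  have hfix : ∀ b : B, (∀ g : E ≃ₐ[K⸨X⸩] E, g • b = b) → ∃ a, algebraMap K⟦X⟧ B a = b := by
    intro b hb
    have h1 : (b : E) ∈ Set.range (algebraMap K⸨X⸩ E) := by
      rw [IsGalois.mem_range_algebraMap_iff_fixed]
      intro g
      rw [← hsm, hb]
    obtain ⟨f, hf⟩ := h1
    have h2 : IsIntegral K⟦X⟧ f := by
      have := b.2
      rw [mem_integralClosure_iff, ← hf] at this
      exact (isIntegral_algebraMap_iff (algebraMap K⸨X⸩ E).injective).1 this
    obtain ⟨a, rfl⟩ := IsIntegrallyClosed.isIntegral_iff.1 h2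
    refine ⟨a, Subtype.ext ?_⟩
    rw [← hf, ← IsScalarTower.algebraMap_apply]
    rfl
  have hfrac : IsFractionRing B E :=
    integralClosure.isFractionRing_of_finite_extension K⸨X⸩ E
  have hfaith : FaithfulSMul (E ≃ₐ[K⸨X⸩] E) B := ⟨fun {g h} hgh => by
    ext x
    obtain ⟨a, b, hb, rfl⟩ := IsFractionRing.div_surjective (A := B) x
    rw [map_div₀, map_div₀]
    have h1 := congrArg (algebraMap B E) (hgh a)
    have h2 := congrArg (algebraMap B E) (hgh b)
    exact congrArg₂ (· / ·) h1 h2⟩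
  have hG : (Nat.card (E ≃ₐ[K⸨X⸩] E) : K) ≠ 0 := by rwa [hcard]
  have hres := aux_res hinj hA hfix hG
  obtain ⟨π, hπ, c, hc, hgπ, hrg⟩ := aux_core (B := B) (G := E ≃ₐ[K⸨X⸩] E)
    ((algebraMap K⟦X⟧ B).comp PowerSeries.C) (fun g a => hA g _) hres hG
  have hcm : ∀ g, c g ^ m = 1 := fun g => by
    rw [← map_pow, ← hcard, pow_card_eq_one', map_one]
  obtain ⟨w, hw⟩ := hfix (π ^ m) (fun g => by
    rw [smul_pow', hgπ, mul_pow, ← map_pow, hcm, map_one, one_mul])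
  have hw0 : w ≠ 0 := by
    rintro rfl
    rw [map_zero] at hw
    exact pow_ne_zero m hπ.ne_zero hw.symm
  obtain ⟨k, u, hu⟩ := IsDiscreteValuationRing.eq_unit_mul_pow_irreducible hw0
    (PowerSeries.X_prime (R := K)).irreducible
  have hX0 : algebraMap K⟦X⟧ B PowerSeries.X ≠ 0 := by
    rw [map_ne_zero_iff _ hinj]
    exact PowerSeries.X_ne_zero
  obtain ⟨e, v, hv⟩ := IsDiscreteValuationRing.eq_unit_mul_pow_irreducible hX0 hπ
  have hme : m = e * k := by
    refine IsDiscreteValuationRing.unit_mul_pow_congr_pow hπ hπ 1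
      (Units.map (algebraMap K⟦X⟧ B : K⟦X⟧ →* B) u * v ^ k) m (e * k) ?_
    rw [Units.val_one, one_mul, ← hw, hu, map_mul, map_pow, hv, mul_pow, ← pow_mul]
    simp [mul_assoc]
  have he0 : 0 < e := Nat.pos_of_ne_zero fun h => by simp [h] at hme; omega
  have hce : ∀ g, c g ^ e = 1 := by
    intro g
    have h1 := hA g PowerSeries.X
    rw [hv, smul_mul', smul_pow', hgπ, mul_pow, ← mul_assoc] at h1
    have h2 := congrArg (IsLocalRing.residue B)
      (mul_right_cancel₀ (pow_ne_zero e hπ.ne_zero) h1)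
    rw [map_mul, hrg, mul_eq_left₀ ((IsLocalRing.residue_ne_zero_iff_isUnit _).2 v.isUnit),
      ← map_pow] at h2
    apply ((IsLocalRing.residue B).comp ((algebraMap K⟦X⟧ B).comp PowerSeries.C)).injective
    rw [map_one]
    exact h2
  have hle : m ≤ e := by
    classical
    have := Fintype.ofFinite (E ≃ₐ[K⸨X⸩] E)
    rw [← hcard, Nat.card_eq_fintype_card, ← Finset.card_univ,
      ← Finset.card_image_of_injective _ hc]
    refine le_trans (Finset.card_le_card (t := Polynomial.nthRootsFinset e (1 : K)) ?_) ?_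
    · intro x hx
      obtain ⟨g, -, rfl⟩ := Finset.mem_image.1 hx
      rw [Polynomial.mem_nthRootsFinset he0]
      exact hce g
    · exact (Multiset.toFinset_card_le _).trans (Polynomial.card_nthRoots e 1)
  have hk1 : k = 1 := by
    rcases k with _ | _ | k
    · omega
    · rfl
    · exfalso; nlinarith
  rw [hk1, pow_one] at hu
  obtain ⟨s, hs⟩ := aux_root K m hmu u u.isUnit
  have hs0 : algebraMap K⟦X⟧ E s ≠ 0 := by
    rw [map_ne_zero_iff _ hinjE]
    rintro rfl
    rw [zero_pow hm.ne'] at hs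
    exact u.ne_zero hs.symm
  have hπ0 : (π : E) ≠ 0 := fun h => hπ.ne_zero (Subtype.ext h)
  refine ⟨π / algebraMap K⟦X⟧ E s, ?_, ?_⟩
  · have h1 : (π : E) ^ m = algebraMap K⟦X⟧ E w := congrArg (algebraMap B E) hw.symm
    rw [div_pow, h1, hu, ← hs, map_mul, map_pow, mul_div_cancel_left₀ _ (pow_ne_zero _ hs0),
      IsScalarTower.algebraMap_apply K⟦X⟧ K⸨X⸩ E]
    congr 1
    exact HahnSeries.ofPowerSeries_X
  · rw [← IsGalois.fixedField_fixingSubgroup (IntermediateField.adjoin K⸨X⸩ _)]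
    convert IntermediateField.fixedField_bot
    rw [eq_bot_iff]
    intro g hg
    have h1 := (IntermediateField.mem_fixingSubgroup_iff _ g).1 hg _
      (IntermediateField.mem_adjoin_simple_self K⸨X⸩ (π / algebraMap K⟦X⟧ E s : E))
    rw [map_div₀, IsScalarTower.algebraMap_apply K⟦X⟧ K⸨X⸩ E, AlgEquiv.commutes,
      ← IsScalarTower.algebraMap_apply K⟦X⟧ K⸨X⸩ E, div_left_inj' hs0] at h1
    have h2 : g • π = 1 * π := by rw [one_mul]; exact Subtype.ext h1
    rw [hgπ] at h2
    have h3 := mul_right_cancel₀ hπ.ne_zero h2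
    rw [Subgroup.mem_bot]
    apply hc
    rw [map_one]
    apply ((algebraMap K⟦X⟧ B).comp PowerSeries.C).injective
    rw [h3, map_one]


/- STATEMENT 14: let `K` be separably closed and `E/K((z))` a finite Galois extension of
degree `m` with `m` invertible in `K`.  Then there is a ring isomorphism `e : E ≃ K((t))`
whose restriction to `K((z))` is the `K`-algebra embedding acting as the identity on
coefficients and sending `z` to `t^m`; i.e. for every Laurent series `f`, the series
`e (f)` has coefficient of `t^(m·k)` equal to the coefficient of `z^k` in `f` and all
coefficients of `t^j` with `m ∤ j` vanish.  In particular `E` embeds into the field of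
Puiseux series `⋃_m K((z^{1/m}))`. -/
theorem stmt_14 (K : Type*) [Field K] [IsSepClosed K]
    (E : Type*) [Field E] [Algebra (LaurentSeries K) E]
    [FiniteDimensional (LaurentSeries K) E] [IsGalois (LaurentSeries K) E]
    (m : ℕ) (hm : 0 < m) (hmu : IsUnit (m : K))
    (hdeg : Module.finrank (LaurentSeries K) E = m) :
    ∃ e : E ≃+* LaurentSeries K,
      ∀ f : LaurentSeries K,
        (∀ k : ℤ, (e (algebraMap (LaurentSeries K) E f)).coeff ((m : ℤ) * k) = f.coeff k) ∧
        (∀ j : ℤ, ¬ ((m : ℤ) ∣ j) → (e (algebraMap (LaurentSeries K) E f)).coeff j = 0) := by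
  let : Algebra (PowerSeries K) E :=
    ((algebraMap (LaurentSeries K) E).comp (algebraMap (PowerSeries K) (LaurentSeries K))).toAlgebra
  have : IsScalarTower (PowerSeries K) (LaurentSeries K) E := IsScalarTower.of_algebraMap_eq fun _ => rfl
  obtain ⟨p, hp, htop⟩ := aux_final K E m hm hmu.ne_zero hdeg
  obtain ⟨φ, h1, h2, h3, h4⟩ := aux_emb K m hm
  obtain ⟨e, he⟩ := aux_iso φ m hm hdeg _ p hp htop _ h3 h4
  refine ⟨e, fun f => ?_⟩
  rw [he]
  exact ⟨h1 f, h2 f⟩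
end

section
/- Let K be a separably closed field and let E be a finite Galois extension of the field K((z)) of formal Laurent series over K, of degree m, where m is invertible in K. Then the Galois group Gal(E/K((z))) is cyclic of order m. -/
open IsLocalRing

theorem core_cyclic {B G : Type*} [CommRing B] [IsDomain B] [IsLocalRing B] [IsNoetherianRing B]
    [Group G] [Finite G] [MulSemiringAction G B] [FaithfulSMul G B]
    (p : B) (hp0 : p ≠ 0) (hp : maximalIdeal B = Ideal.span {p})
    (htriv : ∀ (σ : G) (b : B), σ • b - b ∈ maximalIdeal B)
    (hcard : IsUnit ((Nat.card G : ℕ) : B)) : IsCyclic G := by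
  have hpm : p ∈ maximalIdeal B := hp ▸ Ideal.mem_span_singleton_self p
  have hmem : ∀ σ : G, ∃ u : B, σ • p = u * p := by
    intro σ
    have h1 : σ • p ∈ maximalIdeal B := by
      have := add_mem (htriv σ p) hpm
      simpa using this
    rw [hp, Ideal.mem_span_singleton'] at h1
    obtain ⟨u, hu⟩ := h1
    exact ⟨u, hu.symm⟩
  choose u hu using hmem
  have hres : ∀ (σ : G) (b : B), residue B (σ • b) = residue B b := fun σ b =>
    Ideal.Quotient.eq.2 (htriv σ b)
  let f : G →* ResidueField B :=
    { toFun := fun σ => residue B (u σ)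
      map_one' := by
        have : u 1 = 1 := by
          apply mul_right_cancel₀ hp0
          rw [← hu, one_smul, one_mul]
        simp [this]
      map_mul' := by
        intro σ τ
        have : u (σ * τ) = (σ • u τ) * u σ := by
          apply mul_right_cancel₀ hp0
          rw [← hu, mul_smul, hu τ, smul_mul', hu σ, mul_assoc]
        simp only [this, map_mul, hres, mul_comm] }
  refine isCyclic_of_injective_ringHom f ?_
  rw [injective_iff_map_eq_one]
  intro σ hσ
  have hσ' : u σ - 1 ∈ maximalIdeal B := by
    rw [← Ideal.Quotient.eq, map_one]; exact hσ
  have hgr : ∀ (i : ℕ) (y : B), y ∈ maximalIdeal B ^ i →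
      σ • y - y ∈ maximalIdeal B ^ (i + 1) := by
    intro i y hy
    rw [hp, Ideal.span_singleton_pow, Ideal.mem_span_singleton'] at hy
    obtain ⟨b, rfl⟩ := hy
    have h1 : σ • (b * p ^ i) - b * p ^ i = ((σ • b) * u σ ^ i - b) * p ^ i := by
      rw [smul_mul', smul_pow', hu, mul_pow]; ring
    rw [h1, pow_succ']
    refine Ideal.mul_mem_mul ?_ (Ideal.pow_mem_pow hpm i)
    rw [← Ideal.Quotient.eq]
    have h2 : residue B (u σ) = 1 := hσ
    change residue B _ = residue B _
    simp [hres, h2]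
  have key : ∀ (i : ℕ) (x : B), σ • x - x ∈ maximalIdeal B ^ i := by
    intro i
    induction i with
    | zero => simp
    | succ i ih =>
      intro x
      have hk : ∀ k : ℕ, σ ^ k • x - x - k * (σ • x - x) ∈ maximalIdeal B ^ (i + 1) := by
        intro k
        induction k with
        | zero => simp
        | succ k ihk =>
          have h1 : (σ ^ k • x - x) ∈ maximalIdeal B ^ i := by
            have := add_mem (Ideal.pow_le_pow_right (Nat.le_succ i) ihk)
              (Ideal.mul_mem_left _ (k : B) (ih x))
            simpa using this
          have h2 := add_mem (hgr i _ h1) ihk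
          convert h2 using 1
          rw [pow_succ', mul_smul, smul_sub]
          push_cast
          ring
      have h3 := hk (Nat.card G)
      rw [pow_card_eq_one', one_smul, sub_self, zero_sub, neg_mem_iff] at h3
      exact (Ideal.unit_mul_mem_iff_mem _ hcard).1 h3
  apply FaithfulSMul.eq_of_smul_eq_smul (α := B)
  intro x
  rw [one_smul]
  have h4 : σ • x - x ∈ (⨅ i : ℕ, maximalIdeal B ^ i) := by
    rw [Ideal.mem_iInf]; exact fun i => key i x
  rw [Ideal.iInf_pow_eq_bot_of_isLocalRing _ (IsLocalRing.maximalIdeal.isMaximal B).ne_top] at h4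
  exact sub_eq_zero.1 h4

theorem localB (K : Type*) [Field K] (E : Type*) [Field E] [Algebra (LaurentSeries K) E]
    [Algebra.IsAlgebraic (LaurentSeries K) E] [Algebra (PowerSeries K) E]
    [IsScalarTower (PowerSeries K) (LaurentSeries K) E] :
    IsLocalRing (integralClosure (PowerSeries K) E) := by
  have hnt : (Valued.v : Valuation (LaurentSeries K)
      (WithZero (Multiplicative ℤ))).IsNontrivial := by
    obtain ⟨x, hx⟩ := LaurentSeries.valuation_surjective (K := K) (WithZero.exp 1)
    refine ⟨⟨x, ?_, ?_⟩⟩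
    · rw [hx]; exact WithZero.coe_ne_zero
    · rw [hx]; decide
  have hr : Nonempty (Valued.v : Valuation (LaurentSeries K)
      (WithZero (Multiplicative ℤ))).RankOne := by
    rw [Valuation.nonempty_rankOne_iff_mulArchimedean]
    exact MulArchimedean.comap (MonoidWithZeroHom.ValueGroup₀.embedding).toMonoidHom
      MonoidWithZeroHom.ValueGroup₀.embedding_strictMono
  let := hr.some
  let : NontriviallyNormedField (LaurentSeries K) := Valued.toNontriviallyNormedField _ _
  have hu : IsUltrametricDist (LaurentSeries K) := inferInstance
  have hc : CompleteSpace (LaurentSeries K) := inferInstance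
  have hint : ∀ x : E, spectralNorm (LaurentSeries K) E x ≤ 1 → IsIntegral (PowerSeries K) x := by
    intro x hx
    have hmon : (minpoly (LaurentSeries K) x).Monic :=
      minpoly.monic (Algebra.IsIntegral.isIntegral x)
    have h1 := (spectralValue_le_one_iff hmon).1 hx
    have h2 : minpoly (LaurentSeries K) x ∈
        Polynomial.lifts (algebraMap (PowerSeries K) (LaurentSeries K)) := by
      rw [Polynomial.lifts_iff_coeff_lifts]
      intro n
      have h3 : Valued.v ((minpoly (LaurentSeries K) x).coeff n) ≤
          (1 : WithZero (Multiplicative ℤ)) :=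
        Valued.toNormedField.norm_le_one_iff.1 (h1 n)
      obtain ⟨F, hF⟩ := (LaurentSeries.val_le_one_iff_eq_coe K _).1 h3
      exact ⟨F, hF⟩
    obtain ⟨q, hq, -, hqm⟩ := Polynomial.lifts_and_natDegree_eq_and_monic h2 hmon
    refine ⟨q, hqm, ?_⟩
    rw [← Polynomial.aeval_def, ← Polynomial.aeval_map_algebraMap (LaurentSeries K), hq,
      minpoly.aeval]
  have key : ∀ a : integralClosure (PowerSeries K) E, 1 ≤ spectralNorm (LaurentSeries K) E a →
      IsUnit a := by
    intro a ha
    have ha0 : (a : E) ≠ 0 := by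
      intro h
      rw [h, spectralNorm_zero] at ha
      linarith
    have h1 : spectralNorm (LaurentSeries K) E ((a : E) * (a : E)⁻¹) =
        spectralNorm (LaurentSeries K) E a * spectralNorm (LaurentSeries K) E (a : E)⁻¹ :=
      spectralAlgNorm_mul _ _
    rw [mul_inv_cancel₀ ha0, spectralNorm_one] at h1
    have h2 : spectralNorm (LaurentSeries K) E (a : E)⁻¹ ≤ 1 := by
      have := spectralNorm_nonneg (K := LaurentSeries K) (L := E) (a : E)⁻¹
      nlinarith
    refine IsUnit.of_mul_eq_one ⟨_, hint _ h2⟩ ?_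
    ext
    exact mul_inv_cancel₀ ha0
  refine IsLocalRing.of_isUnit_or_isUnit_one_sub_self fun a => ?_
  by_contra hcon
  rw [not_or] at hcon
  have h1 : spectralNorm (LaurentSeries K) E a < 1 := by
    by_contra h; exact hcon.1 (key a (not_lt.1 h))
  have h2 : spectralNorm (LaurentSeries K) E (1 - a : integralClosure (PowerSeries K) E) < 1 := by
    by_contra h; exact hcon.2 (key _ (not_lt.1 h))
  have h3 := isNonarchimedean_spectralNorm (K := LaurentSeries K) (L := E) (a : E)
    (1 - a : integralClosure (PowerSeries K) E)
  have h4 : (a : E) + (1 - a : integralClosure (PowerSeries K) E) = 1 := by simp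
  rw [h4, spectralNorm_one] at h3
  exact absurd (h3.trans_lt (max_lt h1 h2)) (lt_irrefl _)

theorem stmt_15 (K : Type*) [Field K] [IsSepClosed K]
    (E : Type*) [Field E] [Algebra (LaurentSeries K) E]
    [FiniteDimensional (LaurentSeries K) E] [IsGalois (LaurentSeries K) E]
    (m : ℕ) (hm : 0 < m) (hmu : IsUnit (m : K))
    (hdeg : Module.finrank (LaurentSeries K) E = m) :
    IsCyclic (E ≃ₐ[LaurentSeries K] E) ∧ Nat.card (E ≃ₐ[LaurentSeries K] E) = m := by
  have hcard : Nat.card (E ≃ₐ[LaurentSeries K] E) = m := by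
    rw [IsGalois.card_aut_eq_finrank, hdeg]
  refine ⟨?_, hcard⟩
  let : Algebra (PowerSeries K) E :=
    ((algebraMap (LaurentSeries K) E).comp (algebraMap (PowerSeries K) (LaurentSeries K))).toAlgebra
  have : IsScalarTower (PowerSeries K) (LaurentSeries K) E := IsScalarTower.of_algebraMap_eq' rfl
  have hsm : SMulCommClass (E ≃ₐ[LaurentSeries K] E) (PowerSeries K) E := by
    refine ⟨fun σ a x => ?_⟩
    rw [← algebraMap_smul (LaurentSeries K) a x, ← algebraMap_smul (LaurentSeries K) a (σ • x)]
    exact smul_comm _ _ _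
  have hloc : IsLocalRing (integralClosure (PowerSeries K) E) := localB K E
  have hded : IsDedekindDomain (integralClosure (PowerSeries K) E) :=
    integralClosure.isDedekindDomain (PowerSeries K) (LaurentSeries K) E
  have hfr : IsFractionRing (integralClosure (PowerSeries K) E) E :=
    integralClosure.isFractionRing_of_finite_extension (LaurentSeries K) E
  have hinjA : Function.Injective (algebraMap (PowerSeries K) E) :=
    (algebraMap (LaurentSeries K) E).injective.comp
      (IsFractionRing.injective (PowerSeries K) (LaurentSeries K))
  have hinj : Function.Injective
      (algebraMap (PowerSeries K) (integralClosure (PowerSeries K) E)) := by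
    intro a b hab
    exact hinjA (congrArg Subtype.val hab)
  have : FaithfulSMul (PowerSeries K) (integralClosure (PowerSeries K) E) :=
    (faithfulSMul_iff_algebraMap_injective _ _).2 hinj
  have hXmem : algebraMap (PowerSeries K) (integralClosure (PowerSeries K) E) PowerSeries.X ∈
      maximalIdeal (integralClosure (PowerSeries K) E) := by
    rw [mem_maximalIdeal, mem_nonunits_iff]
    intro h
    have := (isUnit_map_iff (algebraMap (PowerSeries K) (integralClosure (PowerSeries K) E)) _).1 h
    exact PowerSeries.X_prime.not_isUnit this
  obtain ⟨p, hp⟩ := (maximalIdeal_isPrincipal_of_isDedekindDomain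
    (integralClosure (PowerSeries K) E)).principal
  have hp0 : p ≠ 0 := by
    rintro rfl
    rw [hp] at hXmem
    simp only [Submodule.span_zero_singleton, Submodule.mem_bot] at hXmem
    exact PowerSeries.X_ne_zero (hinj (hXmem.trans (map_zero _).symm))
  -- the residue field
  let φ : PowerSeries K →+* ResidueField (integralClosure (PowerSeries K) E) :=
    (residue _).comp (algebraMap (PowerSeries K) (integralClosure (PowerSeries K) E))
  let : Algebra K (ResidueField (integralClosure (PowerSeries K) E)) :=
    (φ.comp PowerSeries.C).toAlgebra
  have hφ : ∀ a : PowerSeries K, φ a = (φ.comp PowerSeries.C) (PowerSeries.constantCoeff a) := by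
    intro a
    obtain ⟨b, hb⟩ := PowerSeries.X_dvd_iff.2
      (show PowerSeries.constantCoeff (a - PowerSeries.C (PowerSeries.constantCoeff a)) = 0 by simp)
    have hX0 : φ PowerSeries.X = 0 := (residue_eq_zero_iff _).2 hXmem
    have := congrArg φ hb
    rw [map_mul, hX0, zero_mul, map_sub, sub_eq_zero] at this
    exact this
  have halg : Algebra.IsAlgebraic K (ResidueField (integralClosure (PowerSeries K) E)) := by
    have : Algebra.IsIntegral K (ResidueField (integralClosure (PowerSeries K) E)) := by
      refine ⟨fun x => ?_⟩
      obtain ⟨b, rfl⟩ := residue_surjective x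
      obtain ⟨q, hq, hqb⟩ := (Algebra.IsIntegral.isIntegral b : IsIntegral (PowerSeries K) b)
      refine ⟨q.map PowerSeries.constantCoeff, hq.map _, ?_⟩
      have h1 := congrArg (residue _) hqb
      rw [Polynomial.hom_eval₂, map_zero] at h1
      rw [Polynomial.eval₂_map, ← h1]
      congr 1
      ext1 a
      exact (hφ a).symm
    infer_instance
  have hpi : IsPurelyInseparable K (ResidueField (integralClosure (PowerSeries K) E)) :=
    inferInstance
  have hfaith : FaithfulSMul (E ≃ₐ[LaurentSeries K] E) (integralClosure (PowerSeries K) E) := by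
    refine ⟨fun {σ τ} h => ?_⟩
    ext x
    obtain ⟨a, b, -, rfl⟩ := IsFractionRing.div_surjective (integralClosure (PowerSeries K) E) x
    have hh : ∀ c : integralClosure (PowerSeries K) E, σ (c : E) = τ (c : E) :=
      fun c => congrArg Subtype.val (h c)
    rw [map_div₀, map_div₀]
    exact congrArg₂ (· / ·) (hh a) (hh b)
  refine core_cyclic p hp0 hp ?_ ?_
  · intro σ b
    have h1 : MulSemiringAction.toRingHom (E ≃ₐ[LaurentSeries K] E)
        (ResidueField (integralClosure (PowerSeries K) E)) σ = RingHom.id _ := by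
      apply IsPurelyInseparable.injective_comp_algebraMap K
      ext1 k
      change residue (integralClosure (PowerSeries K) E)
        (σ • (algebraMap (PowerSeries K) (integralClosure (PowerSeries K) E) (PowerSeries.C k))) =
        residue (integralClosure (PowerSeries K) E)
          (algebraMap (PowerSeries K) (integralClosure (PowerSeries K) E) (PowerSeries.C k))
      congr 1
      exact Subtype.ext (σ.commutes _)
    have h2 := congrArg (fun f => f (residue _ b)) h1
    exact Ideal.Quotient.eq.1 h2
  · rw [hcard]
    have := hmu.map ((algebraMap (PowerSeries K) (integralClosure (PowerSeries K) E)).comp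
      PowerSeries.C)
    simpa using this
end

section
/- Let K be a separably closed field and let E be a finite Galois extension of the field K((z)) of formal Laurent series over K, of degree m, where m is invertible in K. Then there exists u ∈ E such that u^m ∈ K((z)) and E is generated by u over K((z)), i.e., E = K((z))(u). -/
open IsLocalRing

theorem alg_res {A B : Type*} [CommRing A] [CommRing B] [IsLocalRing A] [IsLocalRing B]
    [Algebra A B] [Algebra.IsIntegral A B] [IsLocalHom (algebraMap A B)] :
    Algebra.IsAlgebraic (ResidueField A) (ResidueField B) := by
  have : Algebra.IsIntegral A (ResidueField B) :=
    Algebra.IsIntegral.of_surjective (IsScalarTower.toAlgHom A B (ResidueField B))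
      residue_surjective
  have : Algebra.IsIntegral (ResidueField A) (ResidueField B) :=
    Algebra.IsIntegral.tower_top (R := A)
  infer_instance

theorem precomp {A B : Type*} [CommRing A] [AddCommGroup B] [Module A B] (I : Ideal A)
    [IsPrecomplete I A] [Module.Free A B] [Module.Finite A B] : IsPrecomplete I B := by
  let b := Module.Free.chooseBasis A B
  have hmem : ∀ (J : Ideal A) (x y : B), x ≡ y [SMOD (J • ⊤ : Submodule A B)] ↔
      ∀ i, b.repr x i ≡ b.repr y i [SMOD (J • ⊤ : Submodule A A)] := by
    intro J x y
    simp only [SModEq.sub_mem]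
    constructor
    · intro h i
      have := Submodule.smul_top_le_comap_smul_top J (b.coord i) h
      simpa using this
    · intro h
      rw [← b.sum_repr (x - y)]
      refine Submodule.sum_mem _ fun i _ => ?_
      refine Submodule.smul_mem_smul ?_ trivial
      simpa using h i
  constructor
  intro f hf
  have : ∀ i, ∃ L : A, ∀ n, b.repr (f n) i ≡ L [SMOD (I ^ n • ⊤ : Submodule A A)] := by
    intro i
    exact IsPrecomplete.prec (inferInstance : IsPrecomplete I A)
      (fun {m n} hmn => (hmem _ _ _).1 (hf hmn) i)
  choose L hL using this
  refine ⟨∑ i, L i • b i, fun n => (hmem _ _ _).2 fun i => ?_⟩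
  rw [b.repr_sum_self]
  exact hL i n

theorem local_of {B : Type*} [CommRing B] [IsDomain B] (I : Ideal B) (hI : I ≠ ⊤)
    [HenselianRing B I] [IsArtinianRing (B ⧸ I)] : IsLocalRing B := by
  have hjac : I ≤ Ideal.jacobson ⊥ := HenselianRing.jac
  have := isLocalHom_of_le_jacobson_bot I hjac
  have : Nontrivial (B ⧸ I) := Ideal.Quotient.nontrivial_iff.2 hI
  have hid : ∀ e : B ⧸ I, e * e = e → e = 0 ∨ e = 1 := by
    intro e he
    obtain ⟨e0, rfl⟩ := Ideal.Quotient.mk_surjective e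
    obtain ⟨a, ha, hae⟩ := HenselianRing.is_henselian (R := B) (I := I)
      (Polynomial.X ^ 2 - Polynomial.X) (by monicity!) e0
      (by
        rw [← Ideal.Quotient.eq_zero_iff_mem]
        simp [pow_two, he])
      (by
        refine IsUnit.of_mul_eq_one (Ideal.Quotient.mk I (2 * e0 - 1)) ?_
        simp [map_ofNat]
        linear_combination 4 * he)
    have : a * (a - 1) = 0 := by
      have : a ^ 2 - a = 0 := by simpa using ha
      linear_combination this
    have h2 : Ideal.Quotient.mk I a = Ideal.Quotient.mk I e0 := Ideal.Quotient.eq.2 hae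
    rw [← h2]
    rcases mul_eq_zero.1 this with h | h
    · left; rw [h, map_zero]
    · right; rw [sub_eq_zero.1 h, map_one]
  have hloc : IsLocalRing (B ⧸ I) := by
    apply IsLocalRing.of_isUnit_or_isUnit_one_sub_self
    intro x
    obtain ⟨n, y, hy⟩ := IsArtinian.exists_pow_succ_smul_dvd x (1 : B ⧸ I)
    simp only [smul_eq_mul, mul_one] at hy
    have h3 : ∀ k, x ^ n = x ^ (n + k) * y ^ k := by
      intro k
      induction k with
      | zero => simp
      | succ k ih => 
        have e1 : x ^ (n + (k+1)) * y ^ (k+1) = (x ^ n.succ * y) * x ^ k * y ^ k := by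
          rw [Nat.succ_eq_add_one]; ring
        rw [e1, hy, ih]; rw [← ih]; ring_nf at ih ⊢; exact ih
    have h4 := h3 n
    rcases hid (x ^ n * y ^ n) (by
      rw [pow_add] at h4
      linear_combination (- y ^ n) * h4) with h | h
    · right
      have : x ^ n = 0 := by rw [h4, pow_add, mul_assoc, h, mul_zero]
      exact IsNilpotent.isUnit_one_sub ⟨n, this⟩
    · left
      by_cases hn : n = 0
      · subst hn
        refine IsUnit.of_mul_eq_one y ?_
        simpa using hy
      · exact (isUnit_pow_iff hn).1 (IsUnit.of_mul_eq_one _ h)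
  exact RingHom.domain_isLocalRing (Ideal.Quotient.mk I)

theorem tame_cyclic {B G : Type*} [CommRing B] [IsDomain B] [IsDiscreteValuationRing B] [Group G]
    [Finite G] [MulSemiringAction G B] [FaithfulSMul G B]
    (htriv : ∀ (g : G) (b : B), g • b - b ∈ maximalIdeal B)
    (hn : IsUnit ((Nat.card G : ℕ) : B)) : IsCyclic G := by
  obtain ⟨ϖ, hϖ⟩ := IsDiscreteValuationRing.exists_irreducible B
  have h0 : ϖ ≠ 0 := hϖ.ne_zero
  have hres : ∀ (g : G) (b : B), residue B (g • b) = residue B b := by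
    intro g b
    rw [← sub_eq_zero, ← map_sub, residue_eq_zero_iff]
    exact htriv g b
  have hex : ∀ g : G, ∃ u : B, g • ϖ = u * ϖ := by
    intro g
    have h1 : g • ϖ ∈ maximalIdeal B := by
      rw [← residue_eq_zero_iff, hres, residue_eq_zero_iff]
      exact (mem_maximalIdeal _).2 hϖ.not_isUnit
    rw [hϖ.maximalIdeal_eq, Ideal.mem_span_singleton'] at h1
    obtain ⟨a, ha⟩ := h1
    exact ⟨a, ha.symm⟩
  choose u hu using hex
  have hu1 : u 1 = 1 := by
    have := hu 1
    rw [one_smul] at this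
    exact mul_right_cancel₀ h0 (by rw [← this, one_mul])
  have humul : ∀ g h, u (g * h) = (g • u h) * u g := by
    intro g h
    apply mul_right_cancel₀ h0
    rw [← hu, mul_smul, hu h, smul_mul', hu g, mul_assoc]
  let χ : G →* ResidueField B :=
    { toFun := fun g => residue B (u g)
      map_one' := by rw [hu1, map_one]
      map_mul' := by
        intro g h
        rw [humul, map_mul, hres, mul_comm] }
  have hker : ∀ g, χ g = 1 → g = 1 := by
    intro g hg
    have key : ∀ (b : B), ∃ v : B, g • b = v * b ∧ residue B v = 1 := by
      intro b
      by_cases hb : b = 0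
      · exact ⟨1, by simp [hb], map_one _⟩
      obtain ⟨k, w, hw⟩ := IsDiscreteValuationRing.eq_unit_mul_pow_irreducible hb hϖ
      refine ⟨(g • (w : B)) * (u g) ^ k * ((w⁻¹ : Bˣ) : B), ?_, ?_⟩
      · rw [hw, smul_mul', smul_pow', hu, mul_pow]
        have : ((w⁻¹ : Bˣ) : B) * w = 1 := by simp
        linear_combination (- (g • (w : B)) * (u g) ^ k * ϖ ^ k) * this
      · have hg' : residue B (u g) = 1 := hg
        rw [map_mul, map_mul, hres, map_pow, hg', one_pow, mul_one, ← map_mul]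
        simp
    have key2 : ∀ (b : B) (i : ℕ), ∃ v : B, g ^ i • b = v * b ∧ residue B v = 1 := by
      intro b i
      induction i with
      | zero => exact ⟨1, by simp, map_one _⟩
      | succ i ih =>
        obtain ⟨v, hv, hv1⟩ := ih
        obtain ⟨w, hw, hw1⟩ := key b
        refine ⟨(g • v) * w, ?_, ?_⟩
        · rw [pow_succ', mul_smul, hv, smul_mul', hw, mul_assoc]
        · rw [map_mul, hres, hv1, hw1, one_mul]
    apply FaithfulSMul.eq_of_smul_eq_smul (α := B)
    intro x
    rw [one_smul, ← sub_eq_zero]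
    set b := g • x - x with hb
    choose v hv hv1 using key2 b
    have hsum : ∑ i ∈ Finset.range (Nat.card G), g ^ i • b = 0 := by
      have : ∀ i, g ^ i • b = g ^ (i+1) • x - g ^ i • x := by
        intro i
        rw [hb, smul_sub, pow_succ, mul_smul]
      simp only [this]
      rw [Finset.sum_range_sub (fun i => g ^ i • x)]
      simp
    simp only [hv] at hsum
    rw [← Finset.sum_mul] at hsum
    rcases mul_eq_zero.1 hsum with h | h
    · exfalso
      have := congrArg (residue B) h
      rw [map_sum] at this
      simp only [hv1] at this
      simp only [Finset.sum_const, Finset.card_range, nsmul_eq_mul, mul_one, map_zero] at this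
      have h2 := hn.map (residue B)
      rw [map_natCast, this] at h2
      exact not_isUnit_zero h2
    · exact h
  refine isCyclic_of_injective_ringHom (R := ResidueField B) χ ?_
  exact (injective_iff_map_eq_one χ).2 hker

theorem triv_res {A B G : Type*} [CommRing A] [CommRing B] [IsLocalRing A] [IsLocalRing B]
    [Algebra A B] [Algebra.IsIntegral A B] [IsLocalHom (algebraMap A B)]
    [IsSepClosed (ResidueField A)] [Group G]
    [MulSemiringAction G B] (hG : ∀ (g : G) (a : A), g • algebraMap A B a = algebraMap A B a)
    (g : G) (b : B) : g • b - b ∈ maximalIdeal B := by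
  have halg : Algebra.IsAlgebraic (ResidueField A) (ResidueField B) := alg_res
  obtain ⟨q, hq⟩ := ExpChar.exists (ResidueField A)
  have : ExpChar (ResidueField B) q :=
    expChar_of_injective_algebraMap (algebraMap (ResidueField A) (ResidueField B)).injective q
  obtain ⟨n, y, hy⟩ := IsPurelyInseparable.pow_mem (ResidueField A) q (residue B b)
  obtain ⟨a, rfl⟩ := residue_surjective y
  have hy' : b ^ q ^ n - algebraMap A B a ∈ maximalIdeal B := by
    rw [← residue_eq_zero_iff, map_sub, map_pow, ← hy, sub_eq_zero]
    rfl
  have hsm : ∀ c ∈ maximalIdeal B, g • c ∈ maximalIdeal B := by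
    intro c hc
    rw [mem_maximalIdeal, mem_nonunits_iff] at hc ⊢
    intro h
    apply hc
    have := h.map (MulSemiringAction.toRingHom G B g⁻¹)
    simpa using this
  have h2 := hsm _ hy'
  rw [smul_sub, hG, smul_pow'] at h2
  rw [← residue_eq_zero_iff]
  apply eq_zero_of_pow_eq_zero (n := q ^ n)
  rw [map_sub, sub_pow_expChar_pow]
  rw [← map_pow, ← map_pow, ← map_sub, residue_eq_zero_iff]
  simpa using Ideal.sub_mem _ h2 hy'

theorem sepClosed_of_equiv {k l : Type*} [Field k] [Field l] [IsSepClosed k] (e : k ≃+* l) :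
    IsSepClosed l := by
  constructor
  intro p hp
  have h1 := IsSepClosed.splits_of_separable _ (hp.map (f := e.symm.toRingHom))
  have h2 := h1.map e.toRingHom
  rw [Polynomial.map_map] at h2
  have : e.toRingHom.comp e.symm.toRingHom = RingHom.id l := by ext; simp
  rwa [this, Polynomial.map_id] at h2

theorem cyclic_main {A F E : Type*} [CommRing A] [IsDomain A] [IsDiscreteValuationRing A]
    [IsAdicComplete (maximalIdeal A) A] [IsSepClosed (ResidueField A)]
    [Field F] [Algebra A F] [IsFractionRing A F] [Field E] [Algebra F E] [Algebra A E]
    [IsScalarTower A F E] [FiniteDimensional F E] [IsGalois F E]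
    (hn : IsUnit ((Module.finrank F E : ℕ) : A)) : IsCyclic Gal(E/F) := by
  let B := integralClosure A E
  have : Module.Finite A B := IsIntegralClosure.finite A F E B
  have : IsDedekindDomain B := integralClosure.isDedekindDomain A F E
  have : IsFractionRing B E := integralClosure.isFractionRing_of_finite_extension F E
  have : FaithfulSMul A E := by
    rw [faithfulSMul_iff_algebraMap_injective, IsScalarTower.algebraMap_eq A F E]
    exact (algebraMap F E).injective.comp (IsFractionRing.injective A F)
  have : FaithfulSMul A B := inferInstance
  have : Module.Free A B := inferInstance
  let I := (maximalIdeal A).map (algebraMap A B)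
  have hI : I ≠ ⊤ := by
    obtain ⟨Q, hQ, hQ2⟩ := Ideal.exists_ideal_over_maximal_of_isIntegral (S := B) (maximalIdeal A)
      (by rw [(RingHom.injective_iff_ker_eq_bot _).1 (FaithfulSMul.algebraMap_injective A B)]
          exact bot_le)
    intro h
    apply hQ.ne_top
    rw [eq_top_iff, ← h]
    exact Ideal.map_le_iff_le_comap.2 hQ2.ge
  have : IsHausdorff I B := IsHausdorff.of_isDomain I hI
  have : IsPrecomplete (maximalIdeal A) B := precomp _
  have : IsPrecomplete I B := IsPrecomplete.map_algebraMap_iff.2 this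
  have : IsAdicComplete I B := {}
  have : IsArtinianRing (B ⧸ I) := by
    have : Module.Finite (A ⧸ maximalIdeal A) (B ⧸ I) := Module.Finite.of_restrictScalars_finite A _ _
    letI := Ideal.Quotient.field (maximalIdeal A)
    exact IsArtinianRing.of_finite (A ⧸ maximalIdeal A) (B ⧸ I)
  have : IsLocalRing B := local_of I hI
  have hnf : ¬ IsField B := by
    intro h
    exact IsDiscreteValuationRing.not_isField A
      (isField_of_isIntegral_of_isField (FaithfulSMul.algebraMap_injective A B) h)
  have : IsDiscreteValuationRing B :=
    ((IsDiscreteValuationRing.TFAE B hnf).out 0 2).2 (inferInstance : IsDedekindDomain B)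
  have : IsLocalHom (algebraMap A B) := inferInstance
  letI : MulSemiringAction Gal(E/F) B := IsIntegralClosure.MulSemiringAction A F E B
  have hact : ∀ (g : Gal(E/F)) (b : B), algebraMap B E (g • b) = g (algebraMap B E b) := by
    intro g b
    exact algebraMap_galRestrict_apply A g b
  have : FaithfulSMul Gal(E/F) B := ⟨by
    intro g h hgh
    apply AlgEquiv.coe_algHom_injective
    apply AlgHom.coe_ringHom_injective
    apply IsFractionRing.ringHom_ext (A := B)
    intro b
    have := congrArg (algebraMap B E) (hgh b)
    rw [hact, hact] at this
    exact this⟩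
  apply tame_cyclic (B := B) (G := Gal(E/F))
  · refine triv_res (A := A) ?_
    intro g a
    apply IsFractionRing.injective B E
    rw [hact, ← IsScalarTower.algebraMap_apply A B E, IsScalarTower.algebraMap_apply A F E]
    exact g.commutes _
  · rw [IsGalois.card_aut_eq_finrank]
    simpa using hn.map (algebraMap A B)

theorem stmt_16 (K : Type*) [Field K] [IsSepClosed K]
    (E : Type*) [Field E] [Algebra (LaurentSeries K) E]
    [FiniteDimensional (LaurentSeries K) E] [IsGalois (LaurentSeries K) E]
    (m : ℕ) (hm : 0 < m) (hmu : IsUnit (m : K))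
    (hdeg : Module.finrank (LaurentSeries K) E = m) :
    ∃ u : E, (∃ v : LaurentSeries K, algebraMap (LaurentSeries K) E v = u ^ m) ∧
      IntermediateField.adjoin (LaurentSeries K) ({u} : Set E) = ⊤ := by
  let _ : Algebra (PowerSeries K) E :=
    ((algebraMap (LaurentSeries K) E).comp (algebraMap (PowerSeries K) (LaurentSeries K))).toAlgebra
  have : IsScalarTower (PowerSeries K) (LaurentSeries K) E := IsScalarTower.of_algebraMap_eq' rfl
  have : IsAdicComplete (maximalIdeal (PowerSeries K)) (PowerSeries K) := by
    rw [PowerSeries.maximalIdeal_eq_span_X]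
    infer_instance
  have : IsSepClosed (ResidueField (PowerSeries K)) :=
    sepClosed_of_equiv (PowerSeries.residueFieldOfPowerSeries (k := K)).symm
  have hcyc : IsCyclic Gal(E/LaurentSeries K) := by
    apply cyclic_main (A := PowerSeries K)
    rw [hdeg]
    simpa using hmu.map (PowerSeries.C (R := K))
  have hprim : (primitiveRoots (Module.finrank (LaurentSeries K) E) (LaurentSeries K)).Nonempty := by
    rw [hdeg]
    have : NeZero (m : K) := ⟨hmu.ne_zero⟩
    obtain ⟨ζ, hζ⟩ := HasEnoughRootsOfUnity.exists_primitiveRoot K m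
    refine ⟨algebraMap K (LaurentSeries K) ζ, ?_⟩
    rw [mem_primitiveRoots hm]
    exact hζ.map_of_injective (algebraMap K (LaurentSeries K)).injective
  obtain ⟨u, ⟨v, hv⟩, hu⟩ := exists_root_adjoin_eq_top_of_isCyclic (LaurentSeries K) E hprim
  exact ⟨u, ⟨v, by rw [hv, hdeg]⟩, hu⟩
end
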